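/- Let $s \in (0,1]$, $\sigma \in (0,s)$, $t \in (1,2]$, $C > 0$. Then there exists $K = K(C,s,\sigma,t) \ge 1$ such that: if $\mu,\nu$ are Borel probability measures on $B(0,1)\subset\mathbb{R}^2$ with $\mathrm{dist}(\mathrm{spt}\,\mu, \mathrm{spt}\,\nu) \ge 1/2$, $\mu(B(x,r)) \le Cr^t$, and $\nu(B(x,r)) \le Cr^s$ for all $x,r$, then there exists $q \in \mathrm{spt}\,\mu$ such that $\mathcal{H}^\sigma_\infty(\pi_q(E')) \ge \frac{1}{K}(\nu(E'))^K$ for all Borel sets $E' \subset \mathrm{spt}\,\nu$, where $\pi_q(y) = (q-y)/|q-y|$ is the radial projection from $q$. -/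

import Mathlib

open MeasureTheory Metric Real ENNReal

noncomputable section

abbrev E2 := EuclideanSpace ℝ (Fin 2)

/-- The support of a measure: points all of whose neighbourhoods have positive measure. -/
def spt (μ : Measure E2) : Set E2 := {x | ∀ r : ℝ, 0 < r → 0 < μ (ball x r)}

/-- The `σ`-dimensional Hausdorff content: infimum of `∑ diam^σ` over countable covers. -/
def hContentInf (σ : ℝ) (A : Set E2) : ℝ≥0∞ :=
  ⨅ (c : ℕ → Set E2) (_ : A ⊆ ⋃ n, c n), ∑' n, EMetric.diam (c n) ^ σ

/-- The radial projection `π_q(y) = (q - y)/|q - y|` from the point `q`. -/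
def radProj (q y : E2) : E2 := ‖q - y‖⁻¹ • (q - y)

/-!
For points `q`, `y`, the arcs of the circle around `π_q(y)` pull back under `π_q` to strips around
the line through `q` and `y`. So the content of `π_q(E')` is large as soon as `ν (strip r q y)` is
`O(r ^ σ)` for `y` in a large part of `E'` (`content_lower`), and the theorem follows from a bound,
for most pairs `(q, y)`, on the `ν`-mass of strips. The right quantitative form is `Tail`: the pairs
for which the strip of some dyadic width `r` has mass above `M r ^ σ` have `μ × ν`-measure at most
`K M ^ (-η)`. Such tails are stable under the operations below, and they yield a point `q` that is
good for all levels `M = 2 ^ k` at once (`exists_good_point`); given `E'`, the level is chosen so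
that the bad points fill at most half of `E'` (`exists_level`), which produces a power of `ν(E')`.

The tail bound is obtained by bootstrapping in the exponent, from the trivial exponent `0`.

* *Duality* (`transfer`, `level_dual`). A tail bound for the `μ`-mass of strips, of exponent below
  the dimension `s` of `ν`, gives one for their `ν`-mass with arbitrarily small loss in the exponent.
  This is a count of triples `(q, y, y')` that are nearly collinear: for fixed `y`, `y'` the points
  `q` fill a strip of width `δ / |y - y'|`, and the sum over `y'` is a Riesz energy of `ν`.
* *Gain* (`level_gain`). As the dimension `t` of `μ` exceeds `1`, the exponent improves by a fixed
  `e > 0`. The reason is the high-low method. The density of `μ` on lines at scale `δ` differs from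
  the one at a much larger scale `ρ` by a function which is small in `L²` (`L2_bound`), because the
  kernel of the difference has mean zero and `μ` has finite energy of order above `1`. At scale
  `ρ` the density is at most `1 / ρ`. So the pairs whose strip has `ν`-mass about `δ ^ σ` are
  almost as few as if `μ` were spread uniformly (`incidence`), except those whose mass comes from
  points very close to `y`, which `transfer` shows to be rare.

A gain from `μ` to `ν` followed by a duality step from `ν` to `μ` raises the exponent for `μ` by
`e / 2` (`Unif.step`), where `e` depends only on `s - σ` and `t - 1`. Finitely many rounds reach
`σ`, and all constants depend only on `C`, `s`, `σ`, `t` (`exists_tail`).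
-/

/-! ### Strips and Riesz energy -/

/-- Twice the signed area of the triangle `q y x`. -/
def crossD (q y x : E2) : ℝ := (y 0 - q 0) * (x 1 - q 1) - (y 1 - q 1) * (x 0 - q 0)

/-- The strip of half-width `r / |q - y|` around the line through `q` and `y`; the whole plane if
`q = y`. Being near a common line is a symmetric condition on three points, and using the area
instead of the distance makes `x ∈ strip r q y` exactly symmetric in `x`, `q`, `y`. -/
def strip (r : ℝ) (q y : E2) : Set E2 := {x | |crossD q y x| ≤ r}

lemma E2.norm_sq (x : E2) : ‖x‖ ^ 2 = x 0 ^ 2 + x 1 ^ 2 := by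
  simp [EuclideanSpace.real_norm_sq_eq, Fin.sum_univ_two]

lemma abs_cross_le (a b : E2) : |a 0 * b 1 - a 1 * b 0| ≤ ‖a‖ * ‖b‖ := by
  apply abs_le_of_sq_le_sq _ (by positivity)
  rw [mul_pow, E2.norm_sq, E2.norm_sq]
  nlinarith [sq_nonneg (a 0 * b 0 + a 1 * b 1)]

lemma abs_dot_le (a b : E2) : |a 0 * b 0 + a 1 * b 1| ≤ ‖a‖ * ‖b‖ := by
  apply abs_le_of_sq_le_sq _ (by positivity)
  rw [mul_pow, E2.norm_sq, E2.norm_sq]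
  nlinarith [sq_nonneg (a 0 * b 1 - a 1 * b 0)]

lemma strip_symm (r : ℝ) (q y : E2) : strip r q y = strip r y q := by
  ext x
  have : crossD y q x = - crossD q y x := by simp only [crossD]; ring
  simp [strip, this]

lemma mem_strip_rot {r : ℝ} {q y x : E2} : x ∈ strip r q y ↔ q ∈ strip r y x := by
  have : crossD y x q = crossD q y x := by simp only [crossD]; ring
  simp [strip, this]

lemma strip_mono {r r' : ℝ} (h : r ≤ r') (q y : E2) : strip r q y ⊆ strip r' q y :=
  fun _ hx => le_trans hx h

@[fun_prop]
lemma continuous_crossD {X : Type*} [TopologicalSpace X] {f g h : X → E2} (hf : Continuous f)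
    (hg : Continuous g) (hh : Continuous h) : Continuous fun p => crossD (f p) (g p) (h p) := by
  unfold crossD; fun_prop

lemma measurableSet_strip3 (r : ℝ) :
    MeasurableSet {p : (E2 × E2) × E2 | p.2 ∈ strip r p.1.1 p.1.2} := by
  apply IsClosed.measurableSet
  have hc : Continuous fun p : (E2 × E2) × E2 => |crossD p.1.1 p.1.2 p.2| := by fun_prop
  exact isClosed_le hc continuous_const

lemma measurable_strip (ω : Measure E2) [SFinite ω] (r : ℝ) :
    Measurable fun p : E2 × E2 => ω (strip r p.1 p.2) :=
  measurable_measure_prodMk_left (measurableSet_strip3 r)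

/-- If `y'` is close to both lines `q y` and `q₀ y`, then the two lines make a small angle at `y`,
so that `q` is close to the line `q₀ y`. -/
lemma mem_strip_of_common {q q₀ y y' : E2} {δ : ℝ} (hq : ‖q‖ ≤ 1) (hq₀ : ‖q₀‖ ≤ 1) (hy : ‖y‖ ≤ 1)
    (hyy : y ≠ y') (h : y' ∈ strip δ q y) (h₀ : y' ∈ strip δ q₀ y) :
    q ∈ strip (4 * δ / dist y y') q₀ y := by
  have hd : 0 < dist y y' := dist_pos.2 hyy
  set v := y' - y with hv
  set a := q₀ - y with ha
  set b := q - y with hb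
  have hvn : ‖v‖ = dist y y' := by rw [dist_comm, dist_eq_norm]
  have han : ‖a‖ ≤ 2 := (norm_sub_le _ _).trans (by linarith)
  have hbn : ‖b‖ ≤ 2 := (norm_sub_le _ _).trans (by linarith)
  have hδ : 0 ≤ δ := (abs_nonneg _).trans h
  have h1 : |v 0 * b 1 - v 1 * b 0| ≤ δ := by
    refine le_trans (le_of_eq ?_) h
    congr 1; simp [crossD, hv, hb]; ring
  have h2 : |v 0 * a 1 - v 1 * a 0| ≤ δ := by
    refine le_trans (le_of_eq ?_) h₀
    congr 1; simp [crossD, hv, ha]; ring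
  have h3 : crossD q₀ y q = -(a 0 * b 1 - a 1 * b 0) := by simp [crossD, ha, hb]; ring
  change |crossD q₀ y q| ≤ _
  rw [h3, abs_neg, le_div_iff₀ hd, ← hvn]
  have hvp : 0 < ‖v‖ := hvn ▸ hd
  have key : (a 0 * b 1 - a 1 * b 0) * ‖v‖ ^ 2 =
      (a 0 * v 0 + a 1 * v 1) * (v 0 * b 1 - v 1 * b 0)
        - (b 0 * v 0 + b 1 * v 1) * (v 0 * a 1 - v 1 * a 0) := by
    rw [E2.norm_sq]; ring
  have h4 : |a 0 * b 1 - a 1 * b 0| * ‖v‖ ^ 2 ≤ (2 * ‖v‖) * δ + (2 * ‖v‖) * δ := by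
    rw [← abs_of_nonneg (sq_nonneg ‖v‖), ← abs_mul, key]
    refine (abs_sub _ _).trans ?_
    rw [abs_mul, abs_mul]
    gcongr
    · exact (abs_dot_le a v).trans (by gcongr)
    · exact (abs_dot_le b v).trans (by gcongr)
  have : (|a 0 * b 1 - a 1 * b 0| * ‖v‖) * ‖v‖ ≤ (4 * δ) * ‖v‖ := by nlinarith
  exact le_of_mul_le_mul_right this hvp

/-- `ω` is Frostman: balls of radius `r` have mass at most `C r ^ s`. -/
def Frost (C s : ℝ) (ω : Measure E2) : Prop :=
  ∀ (x : E2) (r : ℝ), 0 < r → ω (closedBall x r) ≤ ENNReal.ofReal (C * r ^ s)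

lemma Frost.singleton {C s : ℝ} {ω : Measure E2} (h : Frost C s ω) (hs : 0 < s) (x : E2) :
    ω {x} = 0 := by
  have h1 : Filter.Tendsto (fun r : ℝ => ENNReal.ofReal (C * r ^ s)) (nhdsWithin 0 (Set.Ioi 0))
      (nhds 0) := by
    have : Filter.Tendsto (fun r : ℝ => C * r ^ s) (nhdsWithin 0 (Set.Ioi 0)) (nhds (C * 0 ^ s)) :=
      ((Real.continuousAt_rpow_const 0 s (Or.inr hs.le)).tendsto.const_mul C).mono_left
        nhdsWithin_le_nhds
    rw [Real.zero_rpow hs.ne', mul_zero] at this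
    simpa using ENNReal.tendsto_ofReal this
  refine le_antisymm (ge_of_tendsto h1 ?_) bot_le
  filter_upwards [self_mem_nhdsWithin] with r hr
  exact (measure_mono (by simpa using le_of_lt hr)).trans (h x r hr)

/-- A dyadic number comparable to a given one. -/
lemma exists_dyadic {r : ℝ} (h0 : 0 < r) (h1 : r ≤ 1) :
    ∃ j : ℕ, r ≤ (1 / 2 : ℝ) ^ j ∧ (1 / 2 : ℝ) ^ j ≤ 2 * r := by
  obtain ⟨n, hn, hn'⟩ := exists_nat_pow_near_of_lt_one h0 h1 (y := (1 / 2 : ℝ)) (by norm_num)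
    (by norm_num)
  refine ⟨n, hn', ?_⟩
  rw [pow_succ] at hn
  linarith

/-- Riesz energy of a Frostman measure on a ball. Dyadic annuli around `x` give a geometric series
of ratio `(1 / 2) ^ g`, where `g` is the gap between the dimension and the exponent. -/
lemma Frost.energy {C s σ g : ℝ} {ω : Measure E2} (h : Frost C s ω) (hC : 0 ≤ C)
    (hσ : 0 ≤ σ) (hσ2 : σ ≤ 2) (hg : 0 < g) (hsg : σ + g ≤ s) (x : E2) {r₀ : ℝ} (hr : 0 < r₀) :
    ∫⁻ y in closedBall x r₀, ENNReal.ofReal (dist x y ^ (-σ)) ∂ω ≤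
      ENNReal.ofReal (4 * C / (1 - (1 / 2) ^ g) * r₀ ^ (s - σ)) := by
  have hx0 : ω {x} = 0 := h.singleton (by linarith) x
  have hb0 : (0:ℝ) ≤ (1 / 2) ^ g := by positivity
  have hb1 : ((1:ℝ) / 2) ^ g < 1 := Real.rpow_lt_one (by norm_num) (by norm_num) hg
  have hpt : ∀ y, y ≠ x → y ∈ closedBall x r₀ → ENNReal.ofReal (dist x y ^ (-σ)) ≤
      ∑' j : ℕ, (closedBall x (r₀ * (1 / 2) ^ j)).indicator
        (fun _ => ENNReal.ofReal ((r₀ * (1 / 2) ^ j / 2) ^ (-σ))) y := by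
    intro y hy hyr
    have hd : 0 < dist x y := dist_pos.2 hy.symm
    have hdr : dist x y ≤ r₀ := by rw [dist_comm]; exact hyr
    obtain ⟨j, h1, h2⟩ := exists_dyadic (div_pos hd hr) ((div_le_one hr).2 hdr)
    refine le_trans ?_ (ENNReal.le_tsum j)
    rw [Set.indicator_of_mem]
    · apply ENNReal.ofReal_le_ofReal
      apply Real.rpow_le_rpow_of_nonpos (by positivity) _ (by linarith)
      have : r₀ * (1 / 2) ^ j ≤ r₀ * (2 * (dist x y / r₀)) := by gcongr
      have e : r₀ * (2 * (dist x y / r₀)) = 2 * dist x y := by field_simp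
      linarith
    · rw [mem_closedBall, dist_comm]
      rw [div_le_iff₀ hr] at h1
      linarith
  calc ∫⁻ y in closedBall x r₀, ENNReal.ofReal (dist x y ^ (-σ)) ∂ω
      ≤ ∫⁻ y in closedBall x r₀, ∑' j : ℕ, (closedBall x (r₀ * (1 / 2) ^ j)).indicator
        (fun _ => ENNReal.ofReal ((r₀ * (1 / 2) ^ j / 2) ^ (-σ))) y ∂ω := by
        apply lintegral_mono_ae
        rw [ae_restrict_iff' isClosed_closedBall.measurableSet]
        have : ∀ᵐ y ∂ω, y ≠ x := by
          rw [ae_iff]; simpa using hx0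
        filter_upwards [this] with y hy using hpt y hy
    _ ≤ ∫⁻ y, ∑' j : ℕ, (closedBall x (r₀ * (1 / 2) ^ j)).indicator
        (fun _ => ENNReal.ofReal ((r₀ * (1 / 2) ^ j / 2) ^ (-σ))) y ∂ω := setLIntegral_le_lintegral _ _
    _ = ∑' j : ℕ, ENNReal.ofReal ((r₀ * (1 / 2) ^ j / 2) ^ (-σ)) *
          ω (closedBall x (r₀ * (1 / 2) ^ j)) := by
        rw [lintegral_tsum]
        · congr 1; ext j
          rw [lintegral_indicator_const isClosed_closedBall.measurableSet]
        · intro j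
          exact (measurable_const.indicator isClosed_closedBall.measurableSet).aemeasurable
    _ ≤ ∑' j : ℕ, ENNReal.ofReal (4 * C * r₀ ^ (s - σ) * ((1 / 2) ^ g) ^ j) := by
        apply ENNReal.tsum_le_tsum
        intro j
        have hp : 0 < r₀ * (1 / 2) ^ j := by positivity
        refine (mul_le_mul_right (h x _ hp) _).trans ?_
        rw [← ENNReal.ofReal_mul (by positivity)]
        apply ENNReal.ofReal_le_ofReal
        have e1 : (r₀ * (1 / 2) ^ j / 2) ^ (-σ) = (r₀ * (1 / 2) ^ j) ^ (-σ) * 2 ^ σ := by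
          rw [Real.div_rpow hp.le (by norm_num), Real.rpow_neg (by norm_num : (0:ℝ) ≤ 2)]
          simp
        have e2 : (2:ℝ) ^ σ ≤ 4 := by
          calc (2:ℝ) ^ σ ≤ 2 ^ (2:ℝ) := Real.rpow_le_rpow_of_exponent_le (by norm_num) hσ2
            _ = 4 := by norm_num
        have e3 : (r₀ * (1 / 2) ^ j) ^ (-σ) * (r₀ * (1 / 2) ^ j) ^ s
            = r₀ ^ (s - σ) * (((1:ℝ) / 2) ^ (s - σ)) ^ j := by
          rw [← Real.rpow_add hp, Real.mul_rpow hr.le (by positivity), ← Real.rpow_natCast,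
            ← Real.rpow_natCast, ← Real.rpow_mul (by norm_num), ← Real.rpow_mul (by norm_num)]
          ring_nf
        have e4 : ((1:ℝ) / 2) ^ (s - σ) ≤ (1 / 2) ^ g :=
          Real.rpow_le_rpow_of_exponent_ge (by norm_num) (by norm_num) (by linarith)
        calc (r₀ * (1 / 2) ^ j / 2) ^ (-σ) * (C * (r₀ * (1 / 2) ^ j) ^ s)
            = 2 ^ σ * C * ((r₀ * (1 / 2) ^ j) ^ (-σ) * (r₀ * (1 / 2) ^ j) ^ s) := by
              rw [e1]; ring
          _ = 2 ^ σ * C * (r₀ ^ (s - σ) * (((1:ℝ) / 2) ^ (s - σ)) ^ j) := by rw [e3]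
          _ ≤ 4 * C * (r₀ ^ (s - σ) * (((1:ℝ) / 2) ^ g) ^ j) := by gcongr
          _ = _ := by ring
    _ = ENNReal.ofReal (4 * C / (1 - (1 / 2) ^ g) * r₀ ^ (s - σ)) := by
        rw [← ENNReal.ofReal_tsum_of_nonneg (fun j => by positivity)
          ((summable_geometric_of_lt_one hb0 hb1).mul_left _), tsum_mul_left,
          tsum_geometric_of_lt_one hb0 hb1]
        congr 1
        rw [div_eq_mul_inv]; ring

/-! ### Tails and duality -/

/-- The pairs `(q, y)` whose line is, at some dyadic scale `r`, surrounded by a strip with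
`ω`-mass above `M r ^ σ`. -/
def badSet (σ M : ℝ) (ω : Measure E2) : Set (E2 × E2) :=
  {p | ∃ j : ℕ, ENNReal.ofReal (M * ((1 / 2 : ℝ) ^ j) ^ σ) < ω (strip ((1 / 2 : ℝ) ^ j) p.1 p.2)}

lemma measurableSet_badSet (σ M : ℝ) (ω : Measure E2) [SFinite ω] :
    MeasurableSet (badSet σ M ω) := by
  have : badSet σ M ω = ⋃ j : ℕ, {p : E2 × E2 |
      ENNReal.ofReal (M * ((1 / 2 : ℝ) ^ j) ^ σ) < ω (strip ((1 / 2 : ℝ) ^ j) p.1 p.2)} := by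
    ext p; simp [badSet]
  rw [this]
  exact MeasurableSet.iUnion fun j => measurableSet_lt measurable_const (measurable_strip ω _)

/-- Polynomial tails for the maximal function `(q, y) ↦ sup_r r ^ (-σ) ω (strip r q y)` under
`μ × ν`. It is used with `ω = μ` and with `ω = ν`. -/
def Tail (K η σ : ℝ) (μ ν ω : Measure E2) : Prop :=
  ∀ M : ℝ, 1 ≤ M → (μ.prod ν) (badSet σ M ω) ≤ ENNReal.ofReal (K * M ^ (-η))

lemma prod_swap_set (μ ν : Measure E2) [SFinite μ] [SFinite ν] {S : Set (E2 × E2)}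
    (hS : MeasurableSet S) : (ν.prod μ) (Prod.swap ⁻¹' S) = (μ.prod ν) S := by
  rw [← Measure.prod_swap (μ := ν) (ν := μ), Measure.map_apply measurable_swap hS]

lemma Tail.swap {K η σ : ℝ} {μ ν ω : Measure E2} [SFinite μ] [SFinite ν] [SFinite ω]
    (h : Tail K η σ μ ν ω) : Tail K η σ ν μ ω := by
  intro M hM
  refine le_trans (le_of_eq ?_) (h M hM)
  rw [← prod_swap_set μ ν (measurableSet_badSet σ M ω)]
  congr 1
  ext p
  simp only [badSet, Set.mem_ofPred_eq, Set.mem_preimage, Prod.fst_swap, Prod.snd_swap]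
  simp_rw [strip_symm _ p.2 p.1]

/-- Off `badSet` the dyadic bound holds at every scale, at the cost of doubling the width. -/
lemma strip_le_of_not_bad {σ M : ℝ} {ω : Measure E2} [IsProbabilityMeasure ω] {p : E2 × E2}
    (hp : p ∉ badSet σ M ω) (hσ : 0 ≤ σ) (hM : 1 ≤ M) {r : ℝ} (hr : 0 < r) :
    ω (strip r p.1 p.2) ≤ ENNReal.ofReal (M * (2 * r) ^ σ) := by
  rcases le_or_gt r 1 with h1 | h1
  · obtain ⟨j, hj1, hj2⟩ := exists_dyadic hr h1
    have : ω (strip ((1 / 2 : ℝ) ^ j) p.1 p.2) ≤ ENNReal.ofReal (M * ((1 / 2 : ℝ) ^ j) ^ σ) := by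
      by_contra hcon
      exact hp ⟨j, not_le.1 hcon⟩
    refine (measure_mono (strip_mono hj1 _ _)).trans (this.trans ?_)
    apply ENNReal.ofReal_le_ofReal
    gcongr
  · refine prob_le_one.trans ?_
    rw [← ENNReal.ofReal_one]
    apply ENNReal.ofReal_le_ofReal
    have : (1:ℝ) ≤ (2 * r) ^ σ := Real.one_le_rpow (by linarith) hσ
    nlinarith

/-- The constant in the Riesz energy estimate. -/
def cE (C g : ℝ) : ℝ := 4 * C / (1 - (1 / 2) ^ g)

lemma cE_nonneg {C g : ℝ} (hC : 0 ≤ C) (hg : 0 < g) : 0 ≤ cE C g := by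
  have hb1 : ((1:ℝ) / 2) ^ g < 1 := Real.rpow_lt_one (by norm_num) (by norm_num) hg
  unfold cE
  apply div_nonneg (by linarith) (by linarith)

/-- Duality: a bound for the `μ`-mass of strips gives one for their `ν`-mass. Count the triples
`(q, y, y')` with `y'` in the strip of `q` and `y`. For fixed `y`, `y'` the points `q` lie in one
strip of width about `δ / |y - y'|`, whose `μ`-mass is controlled by hypothesis, and the sum over
`y'` is a Riesz energy. It improves when only `y'` at distance at most `r₀` from `y` matter. -/
lemma transfer {C s σ g K η : ℝ} {μ ν : Measure E2} [IsProbabilityMeasure μ]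
    [IsProbabilityMeasure ν] (hC : 0 ≤ C) (hF : Frost C s ν) (hσ : 0 ≤ σ) (hσ1 : σ ≤ 1)
    (hg : 0 < g) (hsg : σ + g ≤ s) (hμ1 : μ (closedBall 0 1)ᶜ = 0) (hν1 : ν (closedBall 0 1)ᶜ = 0)
    (hT : Tail K η σ μ ν μ) {M δ lam r₀ : ℝ} (hM : 1 ≤ M) (hδ : 0 < δ) (hl : 0 < lam)
    (hr₀ : 0 < r₀) (hK : 0 ≤ K) :
    (μ.prod ν) {p | ENNReal.ofReal lam < ν (strip δ p.1 p.2 ∩ closedBall p.2 r₀)} ≤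
      ENNReal.ofReal (K * M ^ (-η) + 8 * cE C g * (M * δ ^ σ * r₀ ^ (s - σ) / lam)) := by
  set Z : Set (E2 × E2) := {p | ENNReal.ofReal lam < ν (strip δ p.1 p.2 ∩ closedBall p.2 r₀)}
  set G : Set (E2 × E2) := (badSet σ M μ)ᶜ ∩ (closedBall 0 1 ×ˢ closedBall 0 1) with hG
  have hGm : MeasurableSet G := (measurableSet_badSet σ M μ).compl.inter
    (isClosed_closedBall.measurableSet.prod isClosed_closedBall.measurableSet)
  set S : Set ((E2 × E2) × E2) :=
    {p | p.1 ∈ G ∧ p.2 ∈ strip δ p.1.1 p.1.2 ∧ p.2 ∈ closedBall p.1.2 r₀} with hS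
  have hSm : MeasurableSet S := by
    refine (measurable_fst hGm).inter ((measurableSet_strip3 δ).inter ?_)
    apply IsClosed.measurableSet
    have hc : Continuous fun p : (E2 × E2) × E2 => dist p.2 p.1.2 := by fun_prop
    exact isClosed_le hc continuous_const
  have hSf : Measurable (S.indicator (fun _ => (1 : ℝ≥0∞))) := measurable_const.indicator hSm
  have hcount : ∫⁻ p, ∫⁻ y', S.indicator (fun _ => (1 : ℝ≥0∞)) (p, y') ∂ν ∂(μ.prod ν) ≤
      ENNReal.ofReal (8 * cE C g * (M * δ ^ σ * r₀ ^ (s - σ))) := by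
    rw [lintegral_prod _ (hSf.lintegral_prod_right').aemeasurable]
    rw [lintegral_lintegral_swap (hSf.lintegral_prod_right').aemeasurable]
    have hin : ∀ y, ∫⁻ q, ∫⁻ y', S.indicator (fun _ => (1 : ℝ≥0∞)) ((q, y), y') ∂ν ∂μ ≤
        ENNReal.ofReal (8 * cE C g * (M * δ ^ σ * r₀ ^ (s - σ))) := by
      intro y
      rw [lintegral_lintegral_swap
        (f := fun q y' => S.indicator (fun _ => (1 : ℝ≥0∞)) ((q, y), y'))
        (hSf.comp (by fun_prop : Measurable fun p : E2 × E2 => ((p.1, y), p.2))).aemeasurable]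
      have hy' : ∀ y', y' ≠ y → ∫⁻ q, S.indicator (fun _ => (1 : ℝ≥0∞)) ((q, y), y') ∂μ ≤
          (closedBall y r₀).indicator
            (fun y' => ENNReal.ofReal (8 * (M * δ ^ σ)) * ENNReal.ofReal (dist y y' ^ (-σ))) y' := by
        intro y' hne
        have hd : 0 < dist y y' := dist_pos.2 hne.symm
        by_cases hex : ∃ q₀, ((q₀, y), y') ∈ S
        · obtain ⟨q₀, hq₀⟩ := hex
          rw [Set.indicator_of_mem hq₀.2.2]
          have hsub : ∀ q, S.indicator (fun _ => (1 : ℝ≥0∞)) ((q, y), y') ≤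
              (strip (4 * δ / dist y y') q₀ y).indicator (fun _ => 1) q := by
            intro q
            by_cases hq : ((q, y), y') ∈ S
            · rw [Set.indicator_of_mem hq, Set.indicator_of_mem]
              exact mem_strip_of_common (by simpa using hq.1.2.1) (by simpa using hq₀.1.2.1)
                (by simpa using hq.1.2.2) hne.symm hq.2.1 hq₀.2.1
            · rw [Set.indicator_of_notMem hq]; exact bot_le
          refine (lintegral_mono hsub).trans ((lintegral_indicator_const_le _ _).trans ?_)
          rw [one_mul]
          refine (strip_le_of_not_bad (p := (q₀, y)) hq₀.1.1 hσ hM (by positivity)).trans ?_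
          rw [← ENNReal.ofReal_mul (by positivity)]
          apply ENNReal.ofReal_le_ofReal
          have e1 : (2 * (4 * δ / dist y y')) ^ σ = 8 ^ σ * δ ^ σ * dist y y' ^ (-σ) := by
            rw [show 2 * (4 * δ / dist y y') = (8 * δ) / dist y y' by ring,
              Real.div_rpow (by positivity) hd.le, Real.mul_rpow (by norm_num) hδ.le,
              Real.rpow_neg hd.le, div_eq_mul_inv]
          have e2 : (8:ℝ) ^ σ ≤ 8 := by
            calc (8:ℝ) ^ σ ≤ 8 ^ (1:ℝ) := Real.rpow_le_rpow_of_exponent_le (by norm_num) hσ1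
              _ = 8 := by norm_num
          rw [e1]
          calc M * (8 ^ σ * δ ^ σ * dist y y' ^ (-σ)) ≤ M * (8 * δ ^ σ * dist y y' ^ (-σ)) := by
                gcongr
            _ = _ := by ring
        · push Not at hex
          have : ∀ q, S.indicator (fun _ => (1 : ℝ≥0∞)) ((q, y), y') = 0 := fun q =>
            Set.indicator_of_notMem (hex q) _
          simp [this]
      have hy0 : ∀ᵐ y' ∂ν, y' ≠ y := by
        rw [ae_iff]; simpa using hF.singleton (by linarith) y
      calc _ ≤ ∫⁻ y', (closedBall y r₀).indicator
            (fun y' => ENNReal.ofReal (8 * (M * δ ^ σ)) * ENNReal.ofReal (dist y y' ^ (-σ))) y' ∂ν := by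
            apply lintegral_mono_ae
            filter_upwards [hy0] with y' h using hy' y' h
        _ = ENNReal.ofReal (8 * (M * δ ^ σ)) *
              ∫⁻ y' in closedBall y r₀, ENNReal.ofReal (dist y y' ^ (-σ)) ∂ν := by
            rw [lintegral_indicator isClosed_closedBall.measurableSet,
              lintegral_const_mul' _ _ ENNReal.ofReal_ne_top]
        _ ≤ ENNReal.ofReal (8 * (M * δ ^ σ)) * ENNReal.ofReal (cE C g * r₀ ^ (s - σ)) := by
            gcongr
            exact hF.energy hC hσ (by linarith) hg hsg y hr₀
        _ = _ := by
            rw [← ENNReal.ofReal_mul (by positivity)]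
            congr 1; ring
    refine (lintegral_mono hin).trans ?_
    simp
  have hZG : (μ.prod ν) (Z ∩ G) ≤
      ENNReal.ofReal (8 * cE C g * (M * δ ^ σ * r₀ ^ (s - σ) / lam)) := by
    have h1 : ENNReal.ofReal lam * (μ.prod ν) (Z ∩ G) ≤
        ∫⁻ p, ∫⁻ y', S.indicator (fun _ => (1 : ℝ≥0∞)) (p, y') ∂ν ∂(μ.prod ν) := by
      refine le_trans ?_ (mul_meas_ge_le_lintegral₀ (hSf.lintegral_prod_right').aemeasurable
        (ENNReal.ofReal lam))
      gcongr
      rintro p ⟨hpZ, hpG⟩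
      have : ∀ y', S.indicator (fun _ => (1 : ℝ≥0∞)) (p, y') =
          (strip δ p.1 p.2 ∩ closedBall p.2 r₀).indicator (fun _ => 1) y' := by
        intro y'
        by_cases h : y' ∈ strip δ p.1 p.2 ∩ closedBall p.2 r₀
        · rw [Set.indicator_of_mem h, Set.indicator_of_mem]; exact ⟨hpG, h⟩
        · rw [Set.indicator_of_notMem h, Set.indicator_of_notMem]
          exact fun hh => h hh.2
      simp only [Set.mem_ofPred_eq, this]
      rw [lintegral_indicator_const, one_mul]
      · exact hpZ.le
      · apply MeasurableSet.inter _ isClosed_closedBall.measurableSet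
        exact measurable_prodMk_left (measurableSet_strip3 δ)
    have hl' : ENNReal.ofReal lam ≠ 0 := by simpa using hl
    rw [← ENNReal.mul_le_mul_iff_right hl' ENNReal.ofReal_ne_top]
    refine (h1.trans hcount).trans (le_of_eq ?_)
    rw [← ENNReal.ofReal_mul hl.le]
    congr 1; field_simp
  have hnull : (μ.prod ν) (closedBall 0 1 ×ˢ closedBall 0 1)ᶜ = 0 := by
    rw [Set.compl_prod_eq_union]
    refine measure_union_null ?_ ?_ <;> rw [Measure.prod_prod] <;> simp [hμ1, hν1]
  calc (μ.prod ν) Z ≤ (μ.prod ν) (badSet σ M μ ∪ (closedBall 0 1 ×ˢ closedBall 0 1)ᶜ ∪ (Z ∩ G)) := by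
        apply measure_mono
        intro p hp
        by_cases h1 : p ∈ badSet σ M μ
        · exact Or.inl (Or.inl h1)
        by_cases h2 : p ∈ (closedBall (0:E2) 1 ×ˢ closedBall (0:E2) 1)
        · exact Or.inr ⟨hp, h1, h2⟩
        · exact Or.inl (Or.inr h2)
    _ ≤ (μ.prod ν) (badSet σ M μ) + 0 + (μ.prod ν) (Z ∩ G) := by
        refine (measure_union_le _ _).trans ?_
        gcongr
        exact (measure_union_le _ _).trans (by rw [hnull])
    _ ≤ ENNReal.ofReal (K * M ^ (-η)) +
          ENNReal.ofReal (8 * cE C g * (M * δ ^ σ * r₀ ^ (s - σ) / lam)) := by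
        rw [add_zero]
        gcongr
        exact hT M hM
    _ = _ := by
        have := cE_nonneg hC hg
        rw [ENNReal.ofReal_add (by positivity) (by positivity)]

/-! ### Averages over lines -/

lemma integrable_of_bdd_supp {φ : ℝ → ℝ} {B a : ℝ} (hm : Measurable φ) (hB : ∀ z, |φ z| ≤ B)
    (hs : ∀ z, a < |z| → φ z = 0) : Integrable φ := by
  have h1 : IntegrableOn φ (Set.Icc (-a) a) := by
    apply Measure.integrableOn_of_bounded (M := B) (by simp) hm.aestronglyMeasurable
    exact Filter.Eventually.of_forall hB
  rw [← integrableOn_univ]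
  refine h1.of_forall_sdiff_eq_zero MeasurableSet.univ ?_
  rintro z ⟨-, hz⟩
  apply hs
  by_contra hcon
  exact hz (abs_le.1 (not_lt.1 hcon))

/-- Averages of a function over the values `R cos θ` compare to its integral: the Jacobian
`sin θ` is `1 - O(ρ / R)` where `|R cos θ| ≤ ρ`. -/
lemma angle_half {φ : ℝ → ℝ} {B ρ R : ℝ} (hm : Measurable φ) (hB : ∀ z, |φ z| ≤ B)
    (hs : ∀ z, ρ < |z| → φ z = 0) (hR : 0 < R) (hρR : 2 * ρ ≤ R) :
    |(∫ θ in Set.Ioo 0 π, φ (R * cos θ)) - 1 / R * ∫ z, φ z| ≤ ρ / R ^ 2 * ∫ z, |φ z| := by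
  have hsin : ∀ θ ∈ Set.Ioo 0 π, 0 < sin θ := fun θ h => Real.sin_pos_of_pos_of_lt_pi h.1 h.2
  have cov : ∀ f : ℝ → ℝ, (∀ z, ρ < |z| → f z = 0) →
      ∫ θ in Set.Ioo 0 π, sin θ * f (R * cos θ) = 1 / R * ∫ z, f z := by
    intro f hf
    have h1 := integral_image_eq_integral_abs_deriv_smul (s := Set.Ioo 0 π)
      (f := fun θ => R * cos θ) (f' := fun θ => R * (-sin θ)) measurableSet_Ioo
      (fun θ _ => ((Real.hasDerivAt_cos θ).const_mul R).hasDerivWithinAt)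
      (by
        intro a ha b hb hab
        have : cos a = cos b := mul_left_cancel₀ hR.ne' hab
        exact Real.injOn_cos ⟨ha.1.le, ha.2.le⟩ ⟨hb.1.le, hb.2.le⟩ this) f
    have h2 : ∫ z in (fun θ => R * cos θ) '' Set.Ioo 0 π, f z = ∫ z, f z := by
      apply setIntegral_eq_integral_of_forall_compl_eq_zero
      intro z hz
      apply hf
      by_contra hcon
      apply hz
      have hcon := abs_le.1 (not_lt.1 hcon)
      have hz1 : -1 < z / R := by rw [lt_div_iff₀ hR]; linarith
      have hz2 : z / R < 1 := by rw [div_lt_iff₀ hR]; linarith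
      refine ⟨Real.arccos (z / R), ⟨Real.arccos_pos.2 hz2, ?_⟩, ?_⟩
      · refine lt_of_le_of_ne (Real.arccos_le_pi _) ?_
        intro h
        rw [Real.arccos_eq_pi] at h
        linarith
      · simp only [Real.cos_arccos hz1.le hz2.le]
        field_simp
    rw [← h2, h1, ← integral_const_mul]
    apply setIntegral_congr_fun measurableSet_Ioo
    intro θ hθ
    have := hsin θ hθ
    simp only [smul_eq_mul]
    rw [abs_of_nonpos (by nlinarith)]
    field_simp
  have hmc : Measurable fun θ => φ (R * cos θ) := hm.comp (by fun_prop)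
  have hi1 : IntegrableOn (fun θ => φ (R * cos θ)) (Set.Ioo 0 π) := by
    apply Measure.integrableOn_of_bounded (M := B) (by simp) hmc.aestronglyMeasurable
    exact Filter.Eventually.of_forall fun θ => hB _
  have hi2 : IntegrableOn (fun θ => sin θ * φ (R * cos θ)) (Set.Ioo 0 π) := by
    apply Measure.integrableOn_of_bounded (M := B) (by simp)
      (Real.measurable_sin.mul hmc).aestronglyMeasurable
    refine Filter.Eventually.of_forall fun θ => ?_
    change ‖sin θ * φ (R * cos θ)‖ ≤ B
    rw [norm_mul]
    calc ‖sin θ‖ * ‖φ (R * cos θ)‖ ≤ 1 * B :=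
          mul_le_mul (Real.abs_sin_le_one θ) (hB _) (norm_nonneg _) zero_le_one
      _ = B := one_mul B
  have hs' : ∀ z, ρ < |z| → |φ z| = 0 := fun z hz => by rw [hs z hz, abs_zero]
  rw [← cov φ hs, ← integral_sub hi1 hi2]
  calc |∫ θ in Set.Ioo 0 π, (φ (R * cos θ) - sin θ * φ (R * cos θ))|
      ≤ ∫ θ in Set.Ioo 0 π, |φ (R * cos θ) - sin θ * φ (R * cos θ)| :=
        abs_integral_le_integral_abs
    _ ≤ ∫ θ in Set.Ioo 0 π, ρ / R * (sin θ * |φ (R * cos θ)|) := by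
        apply setIntegral_mono_on (hi1.sub hi2).abs _ measurableSet_Ioo
        · intro θ hθ
          change |φ (R * cos θ) - sin θ * φ (R * cos θ)| ≤ ρ / R * (sin θ * |φ (R * cos θ)|)
          by_cases h0 : φ (R * cos θ) = 0
          · simp [h0]
          have hc : |R * cos θ| ≤ ρ := by
            by_contra hcon
            exact h0 (hs _ (not_le.1 hcon))
          rw [abs_mul, abs_of_pos hR] at hc
          have hc1 : |cos θ| ≤ ρ / R := by rw [le_div_iff₀ hR]; linarith
          have hc2 : ρ / R ≤ 1 / 2 := by rw [div_le_iff₀ hR]; linarith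
          have hcc := abs_nonneg (cos θ)
          have hsc : sin θ ^ 2 + |cos θ| ^ 2 = 1 := by rw [sq_abs]; exact Real.sin_sq_add_cos_sq θ
          have hsp := hsin θ hθ
          have hs1 := Real.sin_le_one θ
          have hsh : 1 / 2 ≤ sin θ := by nlinarith
          have hfin : 1 - sin θ ≤ ρ / R * sin θ := by nlinarith
          have e : φ (R * cos θ) - sin θ * φ (R * cos θ) = (1 - sin θ) * φ (R * cos θ) := by ring
          rw [e, abs_mul, abs_of_nonneg (by linarith)]
          calc (1 - sin θ) * |φ (R * cos θ)| ≤ (ρ / R * sin θ) * |φ (R * cos θ)| := by gcongr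
            _ = _ := by ring
        · apply Integrable.const_mul
          refine hi2.abs.congr ?_
          filter_upwards [ae_restrict_mem measurableSet_Ioo] with θ hθ
          rw [abs_mul, abs_of_pos (hsin θ hθ)]
    _ = ρ / R ^ 2 * ∫ z, |φ z| := by
        rw [integral_const_mul, cov _ hs']
        field_simp

/-- The inner product with the unit vector of angle `θ`. -/
def dir (θ : ℝ) (u : E2) : ℝ := u 0 * cos θ + u 1 * sin θ

lemma abs_dir_le (θ : ℝ) (u : E2) : |dir θ u| ≤ ‖u‖ := by
  apply abs_le_of_sq_le_sq _ (by positivity)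
  rw [E2.norm_sq, dir]
  nlinarith [sq_nonneg (u 0 * sin θ - u 1 * cos θ), Real.sin_sq_add_cos_sq θ]

lemma exists_angle (u : E2) : ∃ θ₀, ∀ θ, dir θ u = ‖u‖ * cos (θ - θ₀) := by
  set z : ℂ := ⟨u 0, u 1⟩ with hz
  have hn : ‖z‖ = ‖u‖ := by
    rw [← sq_eq_sq₀ (norm_nonneg _) (norm_nonneg _), E2.norm_sq, Complex.sq_norm,
      Complex.normSq_apply]
    ring
  refine ⟨z.arg, fun θ => ?_⟩
  have h1 : ‖u‖ * cos z.arg = u 0 := by rw [← hn, Complex.norm_mul_cos_arg]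
  have h2 : ‖u‖ * sin z.arg = u 1 := by rw [← hn, Complex.norm_mul_sin_arg]
  rw [Real.cos_sub, dir, ← h1, ← h2]
  ring

/-- Since `dir θ u = ‖u‖ cos (θ - θ₀)`, `angle_half` applies on two half circles. -/
lemma angle_full {φ : ℝ → ℝ} {B ρ : ℝ} {u : E2} (hm : Measurable φ) (hB : ∀ z, |φ z| ≤ B)
    (hs : ∀ z, ρ < |z| → φ z = 0) (hu : u ≠ 0) (hρR : 2 * ρ ≤ ‖u‖) :
    |(∫ θ in Set.Ioc 0 (2 * π), φ (dir θ u)) - 2 / ‖u‖ * ∫ z, φ z| ≤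
      2 * ρ / ‖u‖ ^ 2 * ∫ z, |φ z| := by
  have hR : 0 < ‖u‖ := norm_pos_iff.2 hu
  obtain ⟨θ₀, hθ₀⟩ := exists_angle u
  set R := ‖u‖
  have hint : ∀ (g : ℝ → ℝ) (_ : Measurable g) (_ : ∀ z, |g z| ≤ B) (a b : ℝ),
      IntervalIntegrable (fun θ => g (R * cos θ)) volume a b := by
    intro g hg hgB a b
    rw [intervalIntegrable_iff]
    have hmc : Measurable fun θ => g (R * cos θ) := hg.comp (by fun_prop)
    apply Measure.integrableOn_of_bounded (M := B) (by simp) hmc.aestronglyMeasurable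
    exact Filter.Eventually.of_forall fun θ => hgB _
  have hper : Function.Periodic (fun θ => φ (R * cos θ)) (2 * π) := by
    intro θ; simp
  have e : ∫ θ in Set.Ioc 0 (2 * π), φ (dir θ u) =
      (∫ θ in Set.Ioo 0 π, φ (R * cos θ)) + ∫ θ in Set.Ioo 0 π, φ (-(R * cos θ)) := by
    simp_rw [hθ₀]
    rw [← intervalIntegral.integral_of_le (by positivity),
      intervalIntegral.integral_comp_sub_right (fun θ => φ (R * cos θ)) θ₀]
    have h1 := hper.intervalIntegral_add_eq (0 - θ₀) 0
    rw [show 0 - θ₀ + 2 * π = 2 * π - θ₀ by ring, zero_add] at h1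
    rw [h1, ← intervalIntegral.integral_add_adjacent_intervals (b := π) (hint φ hm hB _ _)
      (hint φ hm hB _ _)]
    congr 1
    · rw [intervalIntegral.integral_of_le (by positivity), integral_Ioc_eq_integral_Ioo]
    · rw [← integral_Ioc_eq_integral_Ioo, ← intervalIntegral.integral_of_le (by positivity)]
      have h2 := intervalIntegral.integral_comp_add_right (a := 0) (b := π)
        (fun θ => φ (R * cos θ)) π
      rw [zero_add, show π + π = 2 * π by ring] at h2
      rw [← h2]
      simp [Real.cos_add_pi]
  have h1 := angle_half hm hB hs hR hρR
  have h2 := angle_half (φ := fun z => φ (-z)) (hm.comp measurable_neg) (fun z => hB _)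
    (fun z hz => hs _ (by rwa [abs_neg])) hR hρR
  rw [integral_neg_eq_self φ, integral_neg_eq_self (fun z => |φ z|)] at h2
  rw [e]
  have := abs_add_le ((∫ θ in Set.Ioo 0 π, φ (R * cos θ)) - 1 / R * ∫ z, φ z)
    ((∫ θ in Set.Ioo 0 π, φ (-(R * cos θ))) - 1 / R * ∫ z, φ z)
  calc _ = |((∫ θ in Set.Ioo 0 π, φ (R * cos θ)) - 1 / R * ∫ z, φ z) +
    ((∫ θ in Set.Ioo 0 π, φ (-(R * cos θ))) - 1 / R * ∫ z, φ z)| := by congr 1; ring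
    _ ≤ _ := this.trans (add_le_add h1 h2)
    _ = _ := by ring

/-- The measure on the space of lines `{x | dir θ x = b}`, parametrised by `(θ, b)`. The range
`|b| ≤ 3` contains every line at distance at most `2` from a point of the unit disc. -/
def lineM : Measure (ℝ × ℝ) :=
  (volume.restrict (Set.Ioc 0 (2 * π))).prod (volume.restrict (Set.Icc (-3) 3))

instance : IsFiniteMeasure lineM := by unfold lineM; infer_instance

/-- Signed distance from the point `x` to the line `l = (θ, b)`. -/
def pr (l : ℝ × ℝ) (x : E2) : ℝ := dir l.1 x - l.2

@[fun_prop]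
lemma continuous_pr {X : Type*} [TopologicalSpace X] {f : X → ℝ × ℝ} {g : X → E2}
    (hf : Continuous f) (hg : Continuous g) : Continuous fun p => pr (f p) (g p) := by
  unfold pr dir; fun_prop

/-- The change of variables `w = dir θ x - b` in the offset. No boundary term appears, because `f`
vanishes outside `[-2, 2]` while `b` ranges over `[-3, 3]`. -/
lemma kernel_eq {f g : ℝ → ℝ} {B : ℝ} (hf : Measurable f) (hg : Measurable g)
    (hfB : ∀ z, |f z| ≤ B) (hgB : ∀ z, |g z| ≤ B) (hfs : ∀ z, 2 < |z| → f z = 0)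
    {x x' : E2} (hx : ‖x‖ ≤ 1) :
    ∫ l, f (pr l x) * g (pr l x') ∂lineM =
      ∫ w, f w * ∫ θ in Set.Ioc 0 (2 * π), g (w - dir θ (x - x')) := by
  have hB : 0 ≤ B := (abs_nonneg _).trans (hfB 0)
  have hfi : Integrable f := integrable_of_bdd_supp hf hfB hfs
  have hm1 : Measurable fun l : ℝ × ℝ => f (pr l x) * g (pr l x') :=
    (hf.comp (by fun_prop : Continuous fun l => pr l x).measurable).mul
      (hg.comp (by fun_prop : Continuous fun l => pr l x').measurable)
  have hi1 : Integrable (fun l : ℝ × ℝ => f (pr l x) * g (pr l x')) lineM := by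
    apply Integrable.of_bound hm1.aestronglyMeasurable (B * B)
    refine Filter.Eventually.of_forall fun l => ?_
    rw [norm_mul]
    exact mul_le_mul (hfB _) (hgB _) (norm_nonneg _) hB
  unfold lineM at hi1 ⊢
  rw [integral_prod _ hi1]
  have hd : Continuous fun p : ℝ × ℝ => p.2 - dir p.1 (x - x') := by unfold dir; fun_prop
  have hinner : ∀ θ, ∫ b in Set.Icc (-3) 3, f (pr (θ, b) x) * g (pr (θ, b) x') =
      ∫ w, f w * g (w - dir θ (x - x')) := by
    intro θ
    rw [setIntegral_eq_integral_of_forall_compl_eq_zero]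
    · rw [← integral_sub_left_eq_self (fun w => f w * g (w - dir θ (x - x'))) volume (dir θ x)]
      congr 1; ext b
      congr 2
      simp [pr, dir]; ring
    · intro b hb
      rw [hfs, zero_mul]
      by_contra hcon
      apply hb
      have h1 := abs_le.1 (not_lt.1 hcon)
      have h2 := abs_le.1 ((abs_dir_le θ x).trans hx)
      simp only [pr] at h1
      constructor <;> linarith
  simp_rw [hinner]
  rw [integral_integral_swap]
  · simp_rw [integral_const_mul]
  · have h1 : Integrable (fun p : ℝ × ℝ => B * f p.2)
        ((volume.restrict (Set.Ioc 0 (2 * π))).prod volume) :=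
      (integrable_const B).mul_prod hfi
    refine h1.mono ?_ ?_
    · exact ((hf.comp measurable_snd).mul (hg.comp hd.measurable)).aestronglyMeasurable
    · refine Filter.Eventually.of_forall fun p => ?_
      simp only [Function.uncurry, norm_mul]
      rw [mul_comm]
      gcongr
      rw [Real.norm_of_nonneg hB]
      exact hgB _

/-- The normalised indicator of `[-r, r]`. -/
def box (r z : ℝ) : ℝ := if |z| ≤ r then (2 * r)⁻¹ else 0

lemma box_nonneg {r : ℝ} (hr : 0 < r) (z : ℝ) : 0 ≤ box r z := by
  unfold box; split_ifs <;> positivity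

lemma box_le {r : ℝ} (hr : 0 < r) (z : ℝ) : box r z ≤ (2 * r)⁻¹ := by
  unfold box; split_ifs
  · exact le_rfl
  · positivity

lemma box_eq_zero {r z : ℝ} (h : r < |z|) : box r z = 0 := if_neg (not_le.2 h)

lemma measurable_box (r : ℝ) : Measurable (box r) := by
  unfold box
  exact Measurable.ite (isClosed_le (by fun_prop) continuous_const).measurableSet
    measurable_const measurable_const

lemma integral_box {r : ℝ} (hr : 0 < r) : ∫ z, box r z = 1 := by
  have : box r = (Set.Icc (-r) r).indicator (fun _ => (2 * r)⁻¹) := by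
    ext z
    unfold box
    by_cases h : |z| ≤ r
    · rw [if_pos h, Set.indicator_of_mem (show z ∈ Set.Icc (-r) r from abs_le.1 h)]
    · rw [if_neg h, Set.indicator_of_notMem (fun hh : z ∈ Set.Icc (-r) r => h (abs_le.2 hh))]
  rw [this, integral_indicator measurableSet_Icc]
  simp [hr.le]
  field_simp; norm_num

/-! ### High-frequency estimate -/

lemma integrable_lineM {f : ℝ × ℝ → ℝ} {B : ℝ} (hm : Measurable f) (hB : ∀ l, |f l| ≤ B) :
    Integrable f lineM :=
  Integrable.of_bound hm.aestronglyMeasurable B (Filter.Eventually.of_forall hB)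

lemma measurable_box_pr (r : ℝ) (x : E2) : Measurable fun l => box r (pr l x) :=
  (measurable_box r).comp (by fun_prop : Continuous fun l => pr l x).measurable

lemma abs_box_le {r : ℝ} (hr : 0 < r) (z : ℝ) : |box r z| ≤ (2 * r)⁻¹ := by
  rw [abs_of_nonneg (box_nonneg hr z)]; exact box_le hr z

lemma integrable_box {r : ℝ} (hr : 0 < r) : Integrable (box r) :=
  integrable_of_bdd_supp (measurable_box r) (abs_box_le hr) (fun _ => box_eq_zero)

/-- Angular averages of a translate of a function supported in `[-r, r]`. -/
lemma angle_shift {f : ℝ → ℝ} {B r w : ℝ} {u : E2} (hm : Measurable f) (hB : ∀ z, |f z| ≤ B)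
    (hs : ∀ z, r < |z| → f z = 0) (hw : |w| ≤ r) (hu : u ≠ 0) (hr : 4 * r ≤ ‖u‖) :
    |(∫ θ in Set.Ioc 0 (2 * π), f (w - dir θ u)) - 2 / ‖u‖ * ∫ z, f z| ≤
      4 * r / ‖u‖ ^ 2 * ∫ z, |f z| := by
  have h := angle_full (φ := fun z => f (w - z)) (ρ := 2 * r) (hm.comp (by fun_prop))
    (fun z => hB _) (fun z hz => hs _ (by
      have := abs_sub_abs_le_abs_sub z w
      rw [abs_sub_comm]; linarith)) hu (by linarith)
  rw [integral_sub_left_eq_self f volume w,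
    integral_sub_left_eq_self (fun z => |f z|) volume w] at h
  convert h using 2
  ring

lemma integral_abs_box {r : ℝ} (hr : 0 < r) : ∫ z, |box r z| = 1 := by
  simp_rw [abs_of_nonneg (box_nonneg hr _)]
  exact integral_box hr

/-- The measure of the lines close to both `x` and `x'` is at most inversely proportional to their
distance. -/
lemma kernel_upper {r : ℝ} {x x' : E2} (hr : 0 < r) (hr2 : r ≤ 2) (hx : ‖x‖ ≤ 1) (hne : x ≠ x') :
    ∫ l, box r (pr l x) * box r (pr l x') ∂lineM ≤ 16 / dist x x' := by
  rw [kernel_eq (measurable_box r) (measurable_box r) (abs_box_le hr) (abs_box_le hr)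
    (fun z hz => box_eq_zero (by linarith)) hx]
  have hu : x - x' ≠ 0 := sub_ne_zero.2 hne
  have hR : 0 < ‖x - x'‖ := norm_pos_iff.2 hu
  rw [dist_eq_norm]
  set R := ‖x - x'‖ with hRdef
  have hnn : ∀ w, 0 ≤ ∫ θ in Set.Ioc 0 (2 * π), box r (w - dir θ (x - x')) := fun w =>
    integral_nonneg fun θ => box_nonneg hr _
  have hin : ∀ w, |w| ≤ r → ∫ θ in Set.Ioc 0 (2 * π), box r (w - dir θ (x - x')) ≤ 16 / R := by
    intro w hw
    rcases le_or_gt (4 * r) R with h4 | h4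
    · have h := angle_shift (measurable_box r) (abs_box_le hr) (fun z => box_eq_zero) hw hu h4
      rw [integral_box hr, integral_abs_box hr, mul_one, mul_one] at h
      have h1 := (abs_le.1 h).2
      rw [← hRdef] at h1
      have h2 : 4 * r / R ^ 2 ≤ 1 / R := by
        rw [div_le_div_iff₀ (by positivity) hR]; nlinarith
      have h3 : 16 / R = 2 / R + 1 / R + 13 / R := by ring
      have h4 : 0 < 13 / R := by positivity
      linarith
    · calc ∫ θ in Set.Ioc 0 (2 * π), box r (w - dir θ (x - x'))
          ≤ ∫ θ in Set.Ioc 0 (2 * π), (2 * r)⁻¹ :=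
            integral_mono_of_nonneg (Filter.Eventually.of_forall fun θ => box_nonneg hr _)
              (integrable_const _) (Filter.Eventually.of_forall fun θ => box_le hr _)
        _ = 2 * π * (2 * r)⁻¹ := by
            simp [Real.pi_pos.le]
        _ ≤ 16 / R := by
            have := Real.pi_lt_four
            rw [show 2 * π * (2 * r)⁻¹ = π / r by field_simp, div_le_div_iff₀ hr hR]
            nlinarith [Real.pi_pos]
  calc ∫ w, box r w * ∫ θ in Set.Ioc 0 (2 * π), box r (w - dir θ (x - x'))
      ≤ ∫ w, box r w * (16 / R) := by
        refine integral_mono_of_nonneg (Filter.Eventually.of_forall fun w =>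
          mul_nonneg (box_nonneg hr w) (hnn w)) ((integrable_box hr).mul_const _)
          (Filter.Eventually.of_forall fun w => ?_)
        by_cases hw : |w| ≤ r
        · exact mul_le_mul_of_nonneg_left (hin w hw) (box_nonneg hr w)
        · simp [box_eq_zero (not_le.1 hw)]
    _ = 16 / R := by rw [integral_mul_const, integral_box hr, one_mul]

/-- Separated points have many common lines: the matching lower bound at distance at least `1 / 2`. -/
lemma kernel_lower {r : ℝ} {x x' : E2} (hr : 0 < r) (hr2 : r ≤ 1 / 16) (hx : ‖x‖ ≤ 1)
    (hx' : ‖x'‖ ≤ 1) (hd : 1 / 2 ≤ dist x x') :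
    1 / 2 ≤ ∫ l, box r (pr l x) * box r (pr l x') ∂lineM := by
  rw [kernel_eq (measurable_box r) (measurable_box r) (abs_box_le hr) (abs_box_le hr)
    (fun z hz => box_eq_zero (by linarith)) hx]
  rw [dist_eq_norm] at hd
  have hR : 0 < ‖x - x'‖ := by linarith
  have hu : x - x' ≠ 0 := norm_pos_iff.1 hR
  have hR2 : ‖x - x'‖ ≤ 2 := (norm_sub_le _ _).trans (by linarith)
  set R := ‖x - x'‖ with hRdef
  have hin : ∀ w, |w| ≤ r → 1 / 2 ≤ ∫ θ in Set.Ioc 0 (2 * π), box r (w - dir θ (x - x')) := by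
    intro w hw
    have h := angle_shift (measurable_box r) (abs_box_le hr) (fun z => box_eq_zero) hw hu
      (by linarith)
    rw [integral_box hr, integral_abs_box hr, mul_one, mul_one] at h
    have h1 := (abs_le.1 h).1
    rw [← hRdef] at h1
    have h2 : 4 * r / R ^ 2 ≤ 1 / R := by
      rw [div_le_div_iff₀ (by positivity) hR]; nlinarith
    have h3 : 2 / R = 1 / R + 1 / R := by ring
    have h4 : 1 / 2 ≤ 1 / R := by
      rw [div_le_div_iff₀ (by norm_num) hR]; linarith
    linarith
  have hsm : StronglyMeasurable fun w =>
      ∫ θ in Set.Ioc 0 (2 * π), box r (w - dir θ (x - x')) := by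
    have hc : Continuous fun p : ℝ × ℝ => p.1 - dir p.2 (x - x') := by unfold dir; fun_prop
    exact ((measurable_box r).comp hc.measurable).stronglyMeasurable.integral_prod_right'
  have hbd : ∀ w, ‖∫ θ in Set.Ioc 0 (2 * π), box r (w - dir θ (x - x'))‖ ≤
      (2 * r)⁻¹ * (volume.restrict (Set.Ioc 0 (2 * π))).real Set.univ := by
    intro w
    exact norm_integral_le_of_norm_le_const (Filter.Eventually.of_forall fun θ => abs_box_le hr _)
  calc 1 / 2 = ∫ w, box r w * (1 / 2) := by rw [integral_mul_const, integral_box hr, one_mul]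
    _ ≤ _ := by
      refine integral_mono ((integrable_box hr).mul_const _)
        ((integrable_box hr).mul_bdd hsm.aestronglyMeasurable
          (Filter.Eventually.of_forall hbd)) fun w => ?_
      by_cases hw : |w| ≤ r
      · exact mul_le_mul_of_nonneg_left (hin w hw) (box_nonneg hr w)
      · simp [box_eq_zero (not_le.1 hw)]

/-- Cancellation in the high-frequency kernel. As `box δ - box ρ` has integral `0`, its angular
average at distance `R = |x - x'|` loses the main term `2 / R` and is `O(ρ / R²)` once `R` is
large compared with `ρ`. Interpolation with the trivial `O(1 / R)` gives the exponent `1 + τ`. -/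
lemma kernel_diff {δ ρ τ : ℝ} {x x' : E2} (hδ : 0 < δ) (hδρ : δ ≤ ρ) (hρ : ρ ≤ 2) (hτ : 0 ≤ τ)
    (hτ1 : τ ≤ 1) (hx : ‖x‖ ≤ 1) (hne : x ≠ x') :
    ∫ l, (box δ (pr l x) - box ρ (pr l x)) * (box δ (pr l x') - box ρ (pr l x')) ∂lineM ≤
      128 * ρ ^ τ * dist x x' ^ (-(1 + τ)) := by
  have hρ0 : 0 < ρ := hδ.trans_le hδρ
  have hu : x - x' ≠ 0 := sub_ne_zero.2 hne
  have hR : 0 < ‖x - x'‖ := norm_pos_iff.2 hu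
  have hsum : ∀ R : ℝ, 0 < R → R ^ (-(1 + τ)) = (R * R ^ τ)⁻¹ := by
    intro R hR
    rw [Real.rpow_neg hR.le, Real.rpow_add hR, Real.rpow_one]
  rcases le_or_gt (4 * ρ) ‖x - x'‖ with h4 | h4
  · set ψ : ℝ → ℝ := fun z => box δ z - box ρ z with hψ
    have hψm : Measurable ψ := (measurable_box δ).sub (measurable_box ρ)
    have hψB : ∀ z, |ψ z| ≤ (2 * δ)⁻¹ + (2 * ρ)⁻¹ := fun z =>
      (abs_sub _ _).trans (add_le_add (abs_box_le hδ z) (abs_box_le hρ0 z))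
    have hψs : ∀ z, ρ < |z| → ψ z = 0 := fun z hz => by
      simp only [hψ, box_eq_zero hz, box_eq_zero (hδρ.trans_lt hz), sub_zero]
    have hψi : Integrable ψ := (integrable_box hδ).sub (integrable_box hρ0)
    have hψ0 : ∫ z, ψ z = 0 := by
      rw [integral_sub (integrable_box hδ) (integrable_box hρ0), integral_box hδ,
        integral_box hρ0, sub_self]
    have hψ1 : ∫ z, |ψ z| ≤ 2 := by
      calc ∫ z, |ψ z| ≤ ∫ z, (|box δ z| + |box ρ z|) :=
            integral_mono hψi.abs ((integrable_box hδ).abs.add (integrable_box hρ0).abs)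
              fun z => abs_sub _ _
        _ = 2 := by
            rw [integral_add (integrable_box hδ).abs (integrable_box hρ0).abs,
              integral_abs_box hδ, integral_abs_box hρ0]; norm_num
    change ∫ l, ψ (pr l x) * ψ (pr l x') ∂lineM ≤ _
    rw [kernel_eq hψm hψm hψB hψB (fun z hz => hψs z (hρ.trans_lt hz)) hx, dist_eq_norm]
    set R := ‖x - x'‖ with hRdef
    have hin : ∀ w, |w| ≤ ρ →
        |∫ θ in Set.Ioc 0 (2 * π), ψ (w - dir θ (x - x'))| ≤ 8 * ρ / R ^ 2 := by
      intro w hw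
      have h := angle_shift hψm hψB hψs hw hu h4
      rw [hψ0, mul_zero, sub_zero] at h
      refine h.trans ?_
      calc 4 * ρ / ‖x - x'‖ ^ 2 * ∫ z, |ψ z| ≤ 4 * ρ / R ^ 2 * 2 := by gcongr
        _ = _ := by ring
    calc ∫ w, ψ w * ∫ θ in Set.Ioc 0 (2 * π), ψ (w - dir θ (x - x'))
        ≤ ∫ w, |ψ w * ∫ θ in Set.Ioc 0 (2 * π), ψ (w - dir θ (x - x'))| :=
          (le_abs_self _).trans abs_integral_le_integral_abs
      _ ≤ ∫ w, |ψ w| * (8 * ρ / R ^ 2) := by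
          refine integral_mono_of_nonneg (Filter.Eventually.of_forall fun w => abs_nonneg _)
            (hψi.abs.mul_const _) (Filter.Eventually.of_forall fun w => ?_)
          by_cases hw : |w| ≤ ρ
          · simp only [abs_mul]
            exact mul_le_mul_of_nonneg_left (hin w hw) (abs_nonneg _)
          · simp [hψs w (not_le.1 hw)]
      _ ≤ 2 * (8 * ρ / R ^ 2) := by
          rw [integral_mul_const]; gcongr
      _ ≤ 128 * ρ ^ τ * R ^ (-(1 + τ)) := by
          rw [hsum R hR]
          have h1 : ρ / R ≤ (ρ / R) ^ τ := by
            have hle : ρ / R ≤ 1 := by rw [div_le_one hR]; linarith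
            calc ρ / R = (ρ / R) ^ (1:ℝ) := (Real.rpow_one _).symm
              _ ≤ _ := Real.rpow_le_rpow_of_exponent_ge (by positivity) hle hτ1
          rw [Real.div_rpow hρ0.le hR.le] at h1
          have h2 : 0 ≤ 1 / R * (ρ ^ τ / R ^ τ) := by positivity
          calc 2 * (8 * ρ / R ^ 2) = 16 * (1 / R * (ρ / R)) := by field_simp; norm_num
            _ ≤ 16 * (1 / R * (ρ ^ τ / R ^ τ)) := by gcongr
            _ ≤ 128 * (1 / R * (ρ ^ τ / R ^ τ)) := by linarith
            _ = _ := by rw [mul_inv]; ring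
  · have hi : ∀ r s : ℝ, 0 < r → 0 < s →
        Integrable (fun l => box r (pr l x) * box s (pr l x')) lineM := by
      intro r s hr hs
      refine integrable_lineM (B := (2 * r)⁻¹ * (2 * s)⁻¹)
        ((measurable_box_pr r x).mul (measurable_box_pr s x')) fun l => ?_
      rw [abs_mul]
      exact mul_le_mul (abs_box_le hr _) (abs_box_le hs _) (abs_nonneg _) (by positivity)
    calc ∫ l, (box δ (pr l x) - box ρ (pr l x)) * (box δ (pr l x') - box ρ (pr l x')) ∂lineM
        ≤ ∫ l, (box δ (pr l x) * box δ (pr l x') + box ρ (pr l x) * box ρ (pr l x')) ∂lineM := by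
          refine integral_mono ?_ ((hi δ δ hδ hδ).add (hi ρ ρ hρ0 hρ0)) fun l => ?_
          · have := (((hi δ δ hδ hδ).sub (hi δ ρ hδ hρ0)).sub (hi ρ δ hρ0 hδ)).add (hi ρ ρ hρ0 hρ0)
            refine this.congr (Filter.Eventually.of_forall fun l => ?_)
            simp only [Pi.add_apply, Pi.sub_apply]
            ring
          · have h1 := mul_nonneg (box_nonneg hδ (pr l x)) (box_nonneg hρ0 (pr l x'))
            have h2 := mul_nonneg (box_nonneg hρ0 (pr l x)) (box_nonneg hδ (pr l x'))
            simp only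
            nlinarith
      _ ≤ 16 / dist x x' + 16 / dist x x' := by
          rw [integral_add (hi δ δ hδ hδ) (hi ρ ρ hρ0 hρ0)]
          exact add_le_add (kernel_upper hδ (hδρ.trans hρ) hx hne) (kernel_upper hρ0 hρ hx hne)
      _ ≤ 128 * ρ ^ τ * dist x x' ^ (-(1 + τ)) := by
          rw [dist_eq_norm, hsum _ hR]
          set R := ‖x - x'‖
          have h1 : R ^ τ ≤ 4 * ρ ^ τ := by
            calc R ^ τ ≤ (4 * ρ) ^ τ := by gcongr
              _ = 4 ^ τ * ρ ^ τ := Real.mul_rpow (by norm_num) hρ0.le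
              _ ≤ 4 ^ (1:ℝ) * ρ ^ τ := by
                  gcongr
                  norm_num
              _ = _ := by norm_num
          have hRt : 0 < R ^ τ := by positivity
          rw [mul_inv]
          calc 16 / R + 16 / R = 32 * R⁻¹ * (R ^ τ * (R ^ τ)⁻¹) := by
                rw [mul_inv_cancel₀ hRt.ne']; ring
            _ ≤ 32 * R⁻¹ * ((4 * ρ ^ τ) * (R ^ τ)⁻¹) := by gcongr
            _ = _ := by ring

/-- The density at the line `l` of the mass that `μ` puts in its `r`-neighbourhood. -/
def lineAvg (r : ℝ) (μ : Measure E2) (l : ℝ × ℝ) : ℝ := ∫ x, box r (pr l x) ∂μ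

/-- High-frequency estimate: a measure with finite `(1 + τ)`-energy has line densities which
vary little, in `L²`, between the scales `δ ≤ ρ`. Expanding the square turns the left-hand side
into the energy of `μ` for the kernel of `kernel_diff`. -/
lemma L2_bound {C t τ δ ρ : ℝ} {μ : Measure E2} [IsProbabilityMeasure μ] (hC : 0 ≤ C)
    (hF : Frost C t μ) (hμ1 : μ (closedBall 0 1)ᶜ = 0) (hδ : 0 < δ) (hδρ : δ ≤ ρ) (hρ : ρ ≤ 2)
    (hτ : 0 < τ) (hτ1 : τ ≤ 1) (ht : 1 + τ + τ ≤ t) (ht2 : t ≤ 2) :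
    ∫ l, (lineAvg δ μ l - lineAvg ρ μ l) ^ 2 ∂lineM ≤ 256 * cE C τ * ρ ^ τ := by
  have hρ0 : 0 < ρ := hδ.trans_le hδρ
  set ψ : ℝ → ℝ := fun z => box δ z - box ρ z with hψ
  have hψm : Measurable ψ := (measurable_box δ).sub (measurable_box ρ)
  set B : ℝ := (2 * δ)⁻¹ + (2 * ρ)⁻¹ with hBdef
  have hB : 0 ≤ B := by positivity
  have hψB : ∀ z, |ψ z| ≤ B := fun z =>
    (abs_sub _ _).trans (add_le_add (abs_box_le hδ z) (abs_box_le hρ0 z))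
  have hprm : ∀ r l, Measurable fun x => box r (pr l x) := fun r l =>
    (measurable_box r).comp (by fun_prop : Continuous fun x => pr l x).measurable
  have hsq : ∀ l, (lineAvg δ μ l - lineAvg ρ μ l) ^ 2 =
      ∫ p : E2 × E2, ψ (pr l p.1) * ψ (pr l p.2) ∂(μ.prod μ) := by
    intro l
    rw [integral_prod_mul (fun x => ψ (pr l x)) (fun x => ψ (pr l x)), ← sq]
    congr 1
    unfold lineAvg
    rw [← integral_sub]
    · exact Integrable.of_bound (hprm δ l).aestronglyMeasurable _
        (Filter.Eventually.of_forall fun x => abs_box_le hδ _)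
    · exact Integrable.of_bound (hprm ρ l).aestronglyMeasurable _
        (Filter.Eventually.of_forall fun x => abs_box_le hρ0 _)
  have hm3 : Measurable fun q : (ℝ × ℝ) × (E2 × E2) => ψ (pr q.1 q.2.1) * ψ (pr q.1 q.2.2) :=
    (hψm.comp (by fun_prop : Continuous fun q : (ℝ × ℝ) × (E2 × E2) => pr q.1 q.2.1).measurable).mul
      (hψm.comp (by fun_prop : Continuous fun q : (ℝ × ℝ) × (E2 × E2) => pr q.1 q.2.2).measurable)
  have hi3 : Integrable (fun q : (ℝ × ℝ) × (E2 × E2) => ψ (pr q.1 q.2.1) * ψ (pr q.1 q.2.2))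
      (lineM.prod (μ.prod μ)) := by
    refine Integrable.of_bound hm3.aestronglyMeasurable (B * B)
      (Filter.Eventually.of_forall fun q => ?_)
    rw [norm_mul]
    exact mul_le_mul (hψB _) (hψB _) (norm_nonneg _) hB
  simp_rw [hsq]
  rw [integral_integral_swap hi3]
  have hi2 : Integrable (fun p : E2 × E2 => ∫ l, ψ (pr l p.1) * ψ (pr l p.2) ∂lineM)
      (μ.prod μ) := hi3.integral_prod_right
  rw [integral_prod _ hi2]
  have haeb : ∀ᵐ x ∂μ, ‖x‖ ≤ 1 := by
    rw [ae_iff]; convert hμ1 using 2; ext x; simp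
  have hcE : 0 ≤ cE C τ := cE_nonneg hC hτ
  have hx : ∀ᵐ x ∂μ, ∫ x', ∫ l, ψ (pr l x) * ψ (pr l x') ∂lineM ∂μ ≤ 256 * cE C τ * ρ ^ τ := by
    filter_upwards [haeb, hi2.prod_right_ae] with x hx hxi
    have hne : ∀ᵐ x' ∂μ, x ≠ x' := by
      rw [ae_iff]; simpa using hF.singleton (by linarith) x
    have hen := hF.energy hC (σ := 1 + τ) (g := τ) (by linarith) (by linarith) hτ ht x
      (r₀ := 2) (by norm_num)
    have hres : ∫⁻ y in closedBall x 2, ENNReal.ofReal (dist x y ^ (-(1 + τ))) ∂μ =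
        ∫⁻ y, ENNReal.ofReal (dist x y ^ (-(1 + τ))) ∂μ := by
      rw [Measure.restrict_eq_self_of_ae_mem]
      filter_upwards [haeb] with y hy
      rw [mem_closedBall, dist_eq_norm]
      exact (norm_sub_le _ _).trans (by linarith)
    rw [hres] at hen
    have hgm : Measurable fun y => dist x y ^ (-(1 + τ)) := by fun_prop
    have hg0 : 0 ≤ᵐ[μ] fun y => dist x y ^ (-(1 + τ)) :=
      Filter.Eventually.of_forall fun y => by simp only [Pi.zero_apply]; positivity
    have hgi : Integrable (fun y => dist x y ^ (-(1 + τ))) μ := by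
      refine ⟨hgm.aestronglyMeasurable, ?_⟩
      rw [hasFiniteIntegral_iff_ofReal hg0]
      exact hen.trans_lt ENNReal.ofReal_lt_top
    have hgI : ∫ y, dist x y ^ (-(1 + τ)) ∂μ ≤ cE C τ * 2 := by
      rw [integral_eq_lintegral_of_nonneg_ae hg0 hgm.aestronglyMeasurable]
      refine ENNReal.toReal_le_of_le_ofReal (by positivity) (hen.trans ?_)
      apply ENNReal.ofReal_le_ofReal
      change cE C τ * _ ≤ _
      gcongr
      calc (2:ℝ) ^ (t - (1 + τ)) ≤ 2 ^ (1:ℝ) :=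
            Real.rpow_le_rpow_of_exponent_le (by norm_num) (by linarith)
        _ = 2 := by norm_num
    calc ∫ x', ∫ l, ψ (pr l x) * ψ (pr l x') ∂lineM ∂μ
        ≤ ∫ x', 128 * ρ ^ τ * dist x x' ^ (-(1 + τ)) ∂μ := by
          refine integral_mono_ae hxi (hgi.const_mul _) ?_
          filter_upwards [hne] with x' h
          exact kernel_diff hδ hδρ hρ hτ.le hτ1 hx h
      _ = 128 * ρ ^ τ * ∫ y, dist x y ^ (-(1 + τ)) ∂μ := integral_const_mul _ _
      _ ≤ 128 * ρ ^ τ * (cE C τ * 2) := by gcongr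
      _ = _ := by ring
  calc _ ≤ ∫ x, 256 * cE C τ * ρ ^ τ ∂μ :=
        integral_mono_ae hi2.integral_prod_left (integrable_const _) hx
    _ = _ := by simp

/-! ### Incidences -/

/-- If `l` is near two separated points, it is near the whole strip that they span in the unit
disc. -/
lemma pr_le_of_mem_strip {δ : ℝ} {l : ℝ × ℝ} {q y x : E2} (hq1 : ‖q‖ ≤ 1) (hx1 : ‖x‖ ≤ 1)
    (hd : 1 / 2 ≤ dist q y) (hq : |pr l q| ≤ δ) (hy : |pr l y| ≤ δ) (hx : x ∈ strip δ q y) :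
    |pr l x| ≤ 12 * δ := by
  have hδ : 0 ≤ δ := (abs_nonneg _).trans hq
  set u := y - q with hu
  set w := x - q with hw
  set c := cos l.1 with hc
  set s := sin l.1 with hs
  have hun : 1 / 2 ≤ ‖u‖ := by rw [hu, ← dist_eq_norm, dist_comm]; exact hd
  have hwn : ‖w‖ ≤ 2 := (norm_sub_le _ _).trans (by linarith)
  have hue : |u 0 * c + u 1 * s| ≤ 2 * δ := by
    have e : u 0 * c + u 1 * s = pr l y - pr l q := by simp [pr, dir, hu, hc, hs]; ring
    rw [e]
    exact (abs_sub _ _).trans (by linarith)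
  have huw : |u 0 * w 1 - u 1 * w 0| ≤ δ := by
    refine le_trans (le_of_eq ?_) hx
    congr 1
  have hux : |u 0 * s - u 1 * c| ≤ ‖u‖ := by
    apply abs_le_of_sq_le_sq _ (by positivity)
    rw [E2.norm_sq]
    nlinarith [sq_nonneg (u 0 * c + u 1 * s), Real.sin_sq_add_cos_sq l.1]
  have key : (w 0 * c + w 1 * s) * ‖u‖ ^ 2 = (w 0 * u 0 + w 1 * u 1) * (u 0 * c + u 1 * s) +
      (u 0 * w 1 - u 1 * w 0) * (u 0 * s - u 1 * c) := by
    rw [E2.norm_sq]; ring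
  have h1 : |w 0 * c + w 1 * s| * ‖u‖ ^ 2 ≤ (2 * ‖u‖) * (2 * δ) + δ * ‖u‖ := by
    rw [← abs_of_nonneg (sq_nonneg ‖u‖), ← abs_mul, key]
    refine (abs_add_le _ _).trans ?_
    rw [abs_mul, abs_mul]
    gcongr
    exact (abs_dot_le w u).trans (by gcongr)
  have h2 : |w 0 * c + w 1 * s| * ‖u‖ ≤ 5 * δ := by
    have : (|w 0 * c + w 1 * s| * ‖u‖) * ‖u‖ ≤ (5 * δ) * ‖u‖ := by nlinarith
    exact le_of_mul_le_mul_right this (by linarith)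
  have h3 : |w 0 * c + w 1 * s| ≤ 10 * δ := by
    nlinarith [abs_nonneg (w 0 * c + w 1 * s)]
  have e : pr l x = pr l q + (w 0 * c + w 1 * s) := by simp [pr, dir, hw, hc, hs]; ring
  rw [e]
  exact (abs_add_le _ _).trans (by linarith)

/-- Points near one line `l` lie in the strip of any two of them, separated or not. -/
lemma mem_strip_of_pr_le {δ : ℝ} {l : ℝ × ℝ} {q y x : E2} (hq1 : ‖q‖ ≤ 1) (hy1 : ‖y‖ ≤ 1)
    (hx1 : ‖x‖ ≤ 1) (hq : |pr l q| ≤ δ) (hy : |pr l y| ≤ δ) (hx : |pr l x| ≤ δ) :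
    x ∈ strip (8 * δ) q y := by
  have hδ : 0 ≤ δ := (abs_nonneg _).trans hq
  set u := y - q with hu
  set w := x - q with hw
  set c := cos l.1 with hc
  set s := sin l.1 with hs
  have hun : ‖u‖ ≤ 2 := (norm_sub_le _ _).trans (by linarith)
  have hwn : ‖w‖ ≤ 2 := (norm_sub_le _ _).trans (by linarith)
  have hue : |u 0 * c + u 1 * s| ≤ 2 * δ := by
    have e : u 0 * c + u 1 * s = pr l y - pr l q := by simp [pr, dir, hu, hc, hs]; ring
    rw [e]
    exact (abs_sub _ _).trans (by linarith)
  have hwe : |w 0 * c + w 1 * s| ≤ 2 * δ := by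
    have e : w 0 * c + w 1 * s = pr l x - pr l q := by simp [pr, dir, hw, hc, hs]; ring
    rw [e]
    exact (abs_sub _ _).trans (by linarith)
  have hcr : ∀ v : E2, |c * v 1 - s * v 0| ≤ ‖v‖ := by
    intro v
    apply abs_le_of_sq_le_sq _ (by positivity)
    rw [E2.norm_sq]
    nlinarith [sq_nonneg (v 0 * c + v 1 * s), Real.sin_sq_add_cos_sq l.1]
  have key : crossD q y x = (u 0 * c + u 1 * s) * (c * w 1 - s * w 0) -
      (w 0 * c + w 1 * s) * (c * u 1 - s * u 0) := by
    have e : crossD q y x = (u 0 * w 1 - u 1 * w 0) * (s ^ 2 + c ^ 2) := by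
      rw [Real.sin_sq_add_cos_sq, mul_one]; rfl
    rw [e]; ring
  change |crossD q y x| ≤ _
  rw [key]
  refine (abs_sub _ _).trans ?_
  rw [abs_mul, abs_mul]
  calc _ ≤ (2 * δ) * 2 + (2 * δ) * 2 := by
        gcongr
        · exact (hcr w).trans hwn
        · exact (hcr u).trans hun
    _ = _ := by ring

/-- `box` as a function of a line and a point, with values in `ℝ≥0∞`. -/
def bx (r : ℝ) (l : ℝ × ℝ) (x : E2) : ℝ≥0∞ := ENNReal.ofReal (box r (pr l x))

lemma measurable_bx (r : ℝ) : Measurable fun q : (ℝ × ℝ) × E2 => bx r q.1 q.2 :=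
  ((measurable_box r).comp
    (by fun_prop : Continuous fun q : (ℝ × ℝ) × E2 => pr q.1 q.2).measurable).ennreal_ofReal

lemma measurable_bx_comp {X : Type*} [MeasurableSpace X] (r : ℝ) {f : X → ℝ × ℝ} {g : X → E2}
    (hf : Measurable f) (hg : Measurable g) : Measurable fun p => bx r (f p) (g p) := by
  have h := (measurable_bx r).comp (hf.prodMk hg)
  exact h

lemma bx_eq_zero {r : ℝ} {l : ℝ × ℝ} {x : E2} (h : ¬ |pr l x| ≤ r) : bx r l x = 0 := by
  rw [bx, box_eq_zero (not_le.1 h), ENNReal.ofReal_zero]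

lemma bx_le {r : ℝ} (hr : 0 < r) (l : ℝ × ℝ) (x : E2) : bx r l x ≤ ENNReal.ofReal (2 * r)⁻¹ :=
  ENNReal.ofReal_le_ofReal (box_le hr _)

lemma bx_eq {r : ℝ} {l : ℝ × ℝ} {x : E2} (h : |pr l x| ≤ r) :
    bx r l x = ENNReal.ofReal (2 * r)⁻¹ := by rw [bx, box, if_pos h]

lemma lintegral_bx_mul {r : ℝ} (hr : 0 < r) (x x' : E2) :
    ∫⁻ l, bx r l x * bx r l x' ∂lineM =
      ENNReal.ofReal (∫ l, box r (pr l x) * box r (pr l x') ∂lineM) := by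
  rw [ofReal_integral_eq_lintegral_ofReal]
  · congr 1; ext l
    rw [bx, bx, ENNReal.ofReal_mul (box_nonneg hr _)]
  · refine integrable_lineM (B := (2 * r)⁻¹ * (2 * r)⁻¹)
      ((measurable_box_pr r x).mul (measurable_box_pr r x')) fun l => ?_
    rw [abs_mul]
    exact mul_le_mul (abs_box_le hr _) (abs_box_le hr _) (abs_nonneg _) (by positivity)
  · exact Filter.Eventually.of_forall fun l => mul_nonneg (box_nonneg hr _) (box_nonneg hr _)

lemma lintegral_bx {r : ℝ} (hr : 0 < r) (μ : Measure E2) [IsProbabilityMeasure μ] (l : ℝ × ℝ) :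
    ∫⁻ x, bx r l x ∂μ = ENNReal.ofReal (lineAvg r μ l) := by
  rw [lineAvg, ofReal_integral_eq_lintegral_ofReal]
  · rfl
  · exact Integrable.of_bound ((measurable_box r).comp
      (by fun_prop : Continuous fun x => pr l x).measurable).aestronglyMeasurable _
        (Filter.Eventually.of_forall fun x => abs_box_le hr _)
  · exact Filter.Eventually.of_forall fun x => box_nonneg hr _

lemma lineAvg_nonneg {r : ℝ} (hr : 0 < r) (μ : Measure E2) (l : ℝ × ℝ) : 0 ≤ lineAvg r μ l :=
  integral_nonneg fun _ => box_nonneg hr _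

lemma lineAvg_le {r : ℝ} (hr : 0 < r) (μ : Measure E2) [IsProbabilityMeasure μ] (l : ℝ × ℝ) :
    lineAvg r μ l ≤ 1 / r := by
  calc lineAvg r μ l ≤ ∫ _, (2 * r)⁻¹ ∂μ :=
        integral_mono_of_nonneg (Filter.Eventually.of_forall fun _ => box_nonneg hr _)
          (integrable_const _) (Filter.Eventually.of_forall fun _ => box_le hr _)
    _ = (2 * r)⁻¹ := by simp
    _ ≤ 1 / r := by
        rw [one_div]
        exact inv_anti₀ hr (by linarith)

lemma measurable_lineAvg (r : ℝ) (μ : Measure E2) [SFinite μ] : Measurable (lineAvg r μ) := by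
  have hc : Continuous fun p : (ℝ × ℝ) × E2 => pr p.1 p.2 := by fun_prop
  exact ((measurable_box r).comp hc.measurable).stronglyMeasurable.integral_prod_right'.measurable

/-- The pairs whose strip carries mass `lam` away from the second point, with no concentration
above `Lam` at a slightly larger width. -/
def richSet (δ r₀ lam Lam : ℝ) (ν : Measure E2) : Set (E2 × E2) :=
  {p | (1 / 2 ≤ dist p.1 p.2 ∧ ‖p.1‖ ≤ 1 ∧ ‖p.2‖ ≤ 1) ∧
    ENNReal.ofReal lam < ν (strip δ p.1 p.2 \ closedBall p.2 r₀) ∧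
    ν (strip (8 * δ) p.1 p.2) ≤ ENNReal.ofReal Lam}

lemma measurableSet_richSet (δ r₀ lam Lam : ℝ) (ν : Measure E2) [SFinite ν] :
    MeasurableSet (richSet δ r₀ lam Lam ν) := by
  have h1 : IsClosed {p : E2 × E2 | 1 / 2 ≤ dist p.1 p.2 ∧ ‖p.1‖ ≤ 1 ∧ ‖p.2‖ ≤ 1} :=
    (isClosed_le continuous_const (by fun_prop : Continuous fun p : E2 × E2 => dist p.1 p.2)).inter
      ((isClosed_le (by fun_prop : Continuous fun p : E2 × E2 => ‖p.1‖) continuous_const).inter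
        (isClosed_le (by fun_prop : Continuous fun p : E2 × E2 => ‖p.2‖) continuous_const))
  have h2 : MeasurableSet {p : (E2 × E2) × E2 |
      p.2 ∈ strip δ p.1.1 p.1.2 \ closedBall p.1.2 r₀} := by
    refine (measurableSet_strip3 δ).diff ?_
    apply IsClosed.measurableSet
    have hc : Continuous fun p : (E2 × E2) × E2 => dist p.2 p.1.2 := by fun_prop
    exact isClosed_le hc continuous_const
  have h3 : Measurable fun p : E2 × E2 => ν (strip δ p.1 p.2 \ closedBall p.2 r₀) :=
    measurable_measure_prodMk_left h2
  exact h1.measurableSet.inter ((measurableSet_lt measurable_const h3).inter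
    (measurableSet_le (measurable_strip ν _) measurable_const))

/-- The mass, weighted by `1 / lam`, of pairs of points of `ν` near `l` and at mutual distance
greater than `r₀`. -/
def farCount (δ r₀ lam : ℝ) (ν : Measure E2) (l : ℝ × ℝ) : ℝ≥0∞ :=
  (ENNReal.ofReal lam)⁻¹ *
    ∫⁻ y, bx δ l y * ν {y' | |pr l y'| ≤ 12 * δ ∧ y' ∉ closedBall y r₀} ∂ν

/-- Two points at distance at least `r₀` have few common lines (`kernel_upper`), and this is
integrated over pairs of points of `ν`. -/
lemma lintegral_farCount {δ r₀ lam : ℝ} {ν : Measure E2} [IsProbabilityMeasure ν]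
    (hν1 : ν (closedBall 0 1)ᶜ = 0) (hδ : 0 < δ) (hδ1 : δ ≤ 1 / 16) (hr₀ : 0 < r₀)
    (hl : 0 < lam) :
    ∫⁻ l, farCount δ r₀ lam ν l ∂lineM ≤ ENNReal.ofReal (4608 * δ / (lam * r₀)) := by
  have hl' : (ENNReal.ofReal lam)⁻¹ ≠ ∞ := by simpa using hl
  unfold farCount
  rw [lintegral_const_mul' _ _ hl']
  set far : Set (E2 × E2) := {p | r₀ < dist p.2 p.1} with hfar
  have hfm : MeasurableSet far := by
    have hc : Continuous fun p : E2 × E2 => dist p.2 p.1 := by fun_prop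
    exact (isOpen_lt continuous_const hc).measurableSet
  set G : (ℝ × ℝ) → E2 × E2 → ℝ≥0∞ := fun l p => far.indicator (fun _ => 1) p *
    (ENNReal.ofReal (288 * δ) * (bx (12 * δ) l p.1 * bx (12 * δ) l p.2)) with hG
  have hGm : Measurable (Function.uncurry G) := by
    refine ((measurable_const.indicator hfm).comp measurable_snd).mul (Measurable.const_mul ?_ _)
    exact (measurable_bx_comp _ measurable_fst (measurable_fst.comp measurable_snd)).mul
      (measurable_bx_comp _ measurable_fst (measurable_snd.comp measurable_snd))
  have h12 : (0:ℝ) < 12 * δ := by linarith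
  have hpt : ∀ l, ∫⁻ y, bx δ l y * ν {y' | |pr l y'| ≤ 12 * δ ∧ y' ∉ closedBall y r₀} ∂ν ≤
      ∫⁻ p, G l p ∂(ν.prod ν) := by
    intro l
    have hGl : Measurable (G l) := hGm.of_uncurry_left
    rw [lintegral_prod _ hGl.aemeasurable]
    apply lintegral_mono
    intro y
    have hms : MeasurableSet {y' | |pr l y'| ≤ 12 * δ ∧ y' ∉ closedBall y r₀} := by
      have hc : Continuous fun x => |pr l x| := by fun_prop
      exact (isClosed_le hc continuous_const).measurableSet.inter
        isClosed_closedBall.measurableSet.compl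
    simp only
    rw [← lintegral_indicator_one hms, ← lintegral_const_mul' _ _ (by simp [bx])]
    apply lintegral_mono
    intro y'
    simp only [hG]
    by_cases hy : |pr l y| ≤ δ
    · by_cases hy' : |pr l y'| ≤ 12 * δ ∧ y' ∉ closedBall y r₀
      · have hf : (y, y') ∈ far := by
          have := hy'.2
          rw [mem_closedBall, not_le] at this
          exact this
        rw [Set.indicator_of_mem (show y' ∈ {y' | |pr l y'| ≤ 12 * δ ∧ y' ∉ closedBall y r₀}
          from hy'), Set.indicator_of_mem hf, bx_eq hy, bx_eq (r := 12 * δ) (by linarith),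
          bx_eq hy'.1, Pi.one_apply, mul_one, one_mul, ← ENNReal.ofReal_mul (by positivity),
          ← ENNReal.ofReal_mul (by positivity)]
        apply ENNReal.ofReal_le_ofReal
        apply le_of_eq
        field_simp
        norm_num
      · rw [Set.indicator_of_notMem (show y' ∉ {y' | |pr l y'| ≤ 12 * δ ∧ y' ∉ closedBall y r₀}
          from hy'), mul_zero]
        exact bot_le
    · rw [bx_eq_zero hy, zero_mul]; exact bot_le
  have hb : ∀ᵐ p ∂(ν.prod ν), ‖p.1‖ ≤ 1 := by
    have : ∀ᵐ y ∂ν, ‖y‖ ≤ 1 := by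
      rw [ae_iff]; convert hν1 using 2; ext x; simp
    exact Measure.quasiMeasurePreserving_fst.ae this
  have hmain : ∫⁻ l, ∫⁻ p, G l p ∂(ν.prod ν) ∂lineM ≤
      ENNReal.ofReal (288 * δ * (16 / r₀)) := by
    rw [lintegral_lintegral_swap hGm.aemeasurable]
    calc ∫⁻ p, ∫⁻ l, G l p ∂lineM ∂(ν.prod ν)
        ≤ ∫⁻ _, ENNReal.ofReal (288 * δ * (16 / r₀)) ∂(ν.prod ν) := by
          apply lintegral_mono_ae
          filter_upwards [hb] with p hp
          by_cases hf : p ∈ far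
          · have hd : r₀ < dist p.1 p.2 := by rw [dist_comm]; exact hf
            simp only [hG, Set.indicator_of_mem hf, one_mul]
            rw [lintegral_const_mul' _ _ ENNReal.ofReal_ne_top, lintegral_bx_mul h12,
              ← ENNReal.ofReal_mul (by positivity)]
            apply ENNReal.ofReal_le_ofReal
            gcongr
            refine (kernel_upper h12 (by linarith) hp (dist_pos.1 (hr₀.trans hd))).trans ?_
            gcongr
          · simp [hG, Set.indicator_of_notMem hf]
      _ = _ := by simp
  calc _ ≤ (ENNReal.ofReal lam)⁻¹ * ENNReal.ofReal (288 * δ * (16 / r₀)) := by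
        gcongr
        exact (lintegral_mono hpt).trans hmain
    _ = _ := by
        rw [← ENNReal.ofReal_inv_of_pos hl, ← ENNReal.ofReal_mul (by positivity)]
        congr 1
        field_simp
        norm_num

/-- Incidence estimate for `richSet`. By `kernel_lower` the mass of the rich pairs is bounded by the
integral over lines `l` of the mass `A l` of the rich pairs near `l`. With `h` the smaller of
`Lam / δ` and `farCount`, one has `A l ≤ lineAvg δ μ l * h`. The low-frequency part `lineAvg ρ μ`
is at most `1 / ρ`, and the high-frequency part is small in `L²` by `L2_bound`. -/
lemma incidence {C t τ δ ρ r₀ lam Lam κ : ℝ} {μ ν : Measure E2} [IsProbabilityMeasure μ]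
    [IsProbabilityMeasure ν] (hC : 0 ≤ C) (hF : Frost C t μ) (hμ1 : μ (closedBall 0 1)ᶜ = 0)
    (hν1 : ν (closedBall 0 1)ᶜ = 0) (hδ : 0 < δ) (hδρ : δ ≤ ρ) (hρ : ρ ≤ 1) (hδ1 : δ ≤ 1 / 16)
    (hτ : 0 < τ) (hτ1 : τ ≤ 1) (ht : 1 + τ + τ ≤ t) (ht2 : t ≤ 2) (hr₀ : 0 < r₀)
    (hl : 0 < lam) (hL : 0 < Lam) (hκ : 0 < κ) :
    (μ.prod ν) (richSet δ r₀ lam Lam ν) ≤ ENNReal.ofReal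
      (2 * ((1 / ρ + κ * (Lam / δ)) * (4608 * δ / (lam * r₀)) + 256 * cE C τ * ρ ^ τ / κ)) := by
  have hρ0 : 0 < ρ := hδ.trans_le hδρ
  set B := richSet δ r₀ lam Lam ν with hB
  have hBm : MeasurableSet B := measurableSet_richSet _ _ _ _ _
  set A : ℝ × ℝ → ℝ≥0∞ := fun l => ∫⁻ p in B, bx δ l p.1 * bx δ l p.2 ∂(μ.prod ν) with hA
  have hmm : Measurable fun q : (ℝ × ℝ) × (E2 × E2) => bx δ q.1 q.2.1 * bx δ q.1 q.2.2 :=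
    (measurable_bx_comp _ measurable_fst (measurable_fst.comp measurable_snd)).mul
      (measurable_bx_comp _ measurable_fst (measurable_snd.comp measurable_snd))
  have h1 : (μ.prod ν) B ≤ 2 * ∫⁻ l, A l ∂lineM := by
    simp only [hA]
    rw [lintegral_lintegral_swap hmm.aemeasurable, ← lintegral_const_mul' _ _ (by norm_num),
      ← setLIntegral_one]
    apply setLIntegral_mono' hBm
    rintro p ⟨⟨hd, hp1, hp2⟩, -⟩
    rw [lintegral_bx_mul hδ]
    have := kernel_lower hδ hδ1 hp1 hp2 hd
    calc (1:ℝ≥0∞) = 2 * ENNReal.ofReal (1 / 2) := by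
          rw [← ENNReal.ofReal_ofNat, ← ENNReal.ofReal_mul (by norm_num)]; norm_num
      _ ≤ _ := by gcongr
  have hbxm : ∀ l, Measurable fun x => bx δ l x := fun l =>
    measurable_bx_comp _ measurable_const measurable_id
  -- near one line all rich pairs have their second point in a single strip, of mass at most `Lam`
  have hA1 : ∀ l, A l ≤ ENNReal.ofReal (lineAvg δ μ l) * ENNReal.ofReal (Lam / δ) := by
    intro l
    by_cases hex : ∃ p₀ ∈ B, |pr l p₀.1| ≤ δ ∧ |pr l p₀.2| ≤ δ
    · obtain ⟨p₀, hp₀, hq, hy⟩ := hex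
      have hSm : MeasurableSet (strip (8 * δ) p₀.1 p₀.2) :=
        measurable_prodMk_left (measurableSet_strip3 (8 * δ))
      have hle : ∀ p ∈ B, bx δ l p.1 * bx δ l p.2 ≤ bx δ l p.1 *
          (strip (8 * δ) p₀.1 p₀.2).indicator (fun _ => ENNReal.ofReal (2 * δ)⁻¹) p.2 := by
        intro p hp
        gcongr
        by_cases h : |pr l p.2| ≤ δ
        · rw [Set.indicator_of_mem]
          · exact bx_le hδ _ _
          · exact mem_strip_of_pr_le hp₀.1.2.1 hp₀.1.2.2 hp.1.2.2 hq hy h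
        · rw [bx_eq_zero h]; exact bot_le
      calc A l ≤ ∫⁻ p in B, bx δ l p.1 * (strip (8 * δ) p₀.1 p₀.2).indicator
            (fun _ => ENNReal.ofReal (2 * δ)⁻¹) p.2 ∂(μ.prod ν) := setLIntegral_mono' hBm hle
        _ ≤ ∫⁻ p, bx δ l p.1 * (strip (8 * δ) p₀.1 p₀.2).indicator
            (fun _ => ENNReal.ofReal (2 * δ)⁻¹) p.2 ∂(μ.prod ν) := setLIntegral_le_lintegral _ _
        _ = ENNReal.ofReal (lineAvg δ μ l) *
              (ENNReal.ofReal (2 * δ)⁻¹ * ν (strip (8 * δ) p₀.1 p₀.2)) := by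
            rw [lintegral_prod_mul (hbxm l).aemeasurable
              (measurable_const.indicator hSm).aemeasurable, lintegral_bx hδ,
              lintegral_indicator_const hSm]
        _ ≤ ENNReal.ofReal (lineAvg δ μ l) *
              (ENNReal.ofReal (2 * δ)⁻¹ * ENNReal.ofReal Lam) := by
            gcongr
            exact hp₀.2.2
        _ ≤ _ := by
            gcongr
            rw [← ENNReal.ofReal_mul (by positivity)]
            apply ENNReal.ofReal_le_ofReal
            rw [div_eq_mul_inv, mul_comm]
            gcongr
            linarith
    · push Not at hex
      have : A l = 0 := by
        simp only [hA]
        rw [setLIntegral_congr_fun hBm (g := fun _ => 0)]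
        · simp
        · intro p hp
          simp only
          by_cases h : |pr l p.1| ≤ δ
          · rw [bx_eq_zero (not_le.2 (hex p hp h)), mul_zero]
          · rw [bx_eq_zero h, zero_mul]
      rw [this]; exact bot_le
  -- the second point of a rich pair near `l` sees `ν`-mass `lam` near `l`, away from itself
  have hA2 : ∀ l, A l ≤ ENNReal.ofReal (lineAvg δ μ l) * farCount δ r₀ lam ν l := by
    intro l
    set N : E2 → ℝ≥0∞ := fun y => ν {y' | |pr l y'| ≤ 12 * δ ∧ y' ∉ closedBall y r₀} with hN
    have hNm : Measurable N := by
      have hms : MeasurableSet {p : E2 × E2 | |pr l p.2| ≤ 12 * δ ∧ p.2 ∉ closedBall p.1 r₀} := by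
        have hc : Continuous fun p : E2 × E2 => |pr l p.2| := by fun_prop
        have hc' : Continuous fun p : E2 × E2 => dist p.2 p.1 := by fun_prop
        exact (isClosed_le hc continuous_const).measurableSet.inter
          (isClosed_le hc' continuous_const).measurableSet.compl
      exact measurable_measure_prodMk_left hms
    have hle : ∀ p ∈ B, bx δ l p.1 * bx δ l p.2 ≤ bx δ l p.1 *
        ((ENNReal.ofReal lam)⁻¹ * (bx δ l p.2 * N p.2)) := by
      rintro p ⟨⟨hd, hp1, hp2⟩, hp3, -⟩
      by_cases hq : |pr l p.1| ≤ δ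
      swap
      · rw [bx_eq_zero hq, zero_mul]; exact bot_le
      by_cases hy : |pr l p.2| ≤ δ
      swap
      · rw [bx_eq_zero hy, mul_zero]; exact bot_le
      have hNl : ENNReal.ofReal lam ≤ N p.2 := by
        refine hp3.le.trans ?_
        calc ν (strip δ p.1 p.2 \ closedBall p.2 r₀)
            ≤ ν ({y' | |pr l y'| ≤ 12 * δ ∧ y' ∉ closedBall p.2 r₀} ∪ (closedBall 0 1)ᶜ) := by
              apply measure_mono
              rintro x ⟨hx1, hx2⟩
              by_cases hx : x ∈ closedBall (0:E2) 1
              · exact Or.inl ⟨pr_le_of_mem_strip hp1 (by simpa using hx) hd hq hy hx1, hx2⟩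
              · exact Or.inr hx
          _ ≤ N p.2 + 0 := (measure_union_le _ _).trans (by rw [hν1])
          _ = N p.2 := add_zero _
      gcongr
      calc bx δ l p.2 = (ENNReal.ofReal lam)⁻¹ * (bx δ l p.2 * ENNReal.ofReal lam) := by
            rw [mul_left_comm, ENNReal.inv_mul_cancel (by simpa using hl) ENNReal.ofReal_ne_top,
              mul_one]
        _ ≤ _ := by gcongr
    calc A l ≤ ∫⁻ p in B, bx δ l p.1 * ((ENNReal.ofReal lam)⁻¹ * (bx δ l p.2 * N p.2))
          ∂(μ.prod ν) := setLIntegral_mono' hBm hle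
      _ ≤ ∫⁻ p, bx δ l p.1 * ((ENNReal.ofReal lam)⁻¹ * (bx δ l p.2 * N p.2))
          ∂(μ.prod ν) := setLIntegral_le_lintegral _ _
      _ = _ := by
          rw [lintegral_prod_mul (hbxm l).aemeasurable
            (g := fun y => (ENNReal.ofReal lam)⁻¹ * (bx δ l y * N y))
            (((hbxm l).mul hNm).const_mul _).aemeasurable, lintegral_bx hδ, farCount,
            lintegral_const_mul' _ _ (by simpa using hl)]
  set D : ℝ × ℝ → ℝ := fun l => lineAvg δ μ l - lineAvg ρ μ l with hD
  have hDm : Measurable D := (measurable_lineAvg δ μ).sub (measurable_lineAvg ρ μ)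
  -- the product of the high-frequency part with `h` is at most `κ h ^ 2 + D ^ 2 / κ`
  have hA3 : ∀ l, A l ≤ ENNReal.ofReal (1 / ρ + κ * (Lam / δ)) * farCount δ r₀ lam ν l +
      ENNReal.ofReal (D l ^ 2 / κ) := by
    intro l
    have hmin : A l ≤ ENNReal.ofReal (lineAvg δ μ l) *
        min (farCount δ r₀ lam ν l) (ENNReal.ofReal (Lam / δ)) := by
      rcases min_choice (farCount δ r₀ lam ν l) (ENNReal.ofReal (Lam / δ)) with h | h <;> rw [h]
      · exact hA2 l
      · exact hA1 l
    set m := min (farCount δ r₀ lam ν l) (ENNReal.ofReal (Lam / δ)) with hm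
    have hmt : m ≠ ∞ := ne_top_of_le_ne_top ENNReal.ofReal_ne_top (min_le_right _ _)
    set h := m.toReal with hh
    have hmh : m = ENNReal.ofReal h := (ENNReal.ofReal_toReal hmt).symm
    have hh0 : 0 ≤ h := ENNReal.toReal_nonneg
    have hhL : h ≤ Lam / δ :=
      ENNReal.toReal_le_of_le_ofReal (by positivity) (min_le_right _ _)
    have ha0 := lineAvg_nonneg hδ μ l
    have hb1 := lineAvg_le hρ0 μ l
    have hreal : lineAvg δ μ l * h ≤ (1 / ρ + κ * (Lam / δ)) * h + D l ^ 2 / κ := by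
      have hDh : D l * h ≤ κ * h ^ 2 + D l ^ 2 / κ := by
        have e : κ * h ^ 2 + D l ^ 2 / κ - D l * h =
            ((κ * h - D l) ^ 2 + D l * (κ * h)) / κ := by field_simp; ring
        have : 0 ≤ ((κ * h - D l) ^ 2 + D l * (κ * h)) / κ := by
          apply div_nonneg _ hκ.le
          nlinarith [sq_nonneg (κ * h - D l), sq_nonneg (κ * h + D l)]
        linarith
      have e2 : lineAvg δ μ l = lineAvg ρ μ l + D l := by simp [hD]
      have h3 : lineAvg ρ μ l * h ≤ 1 / ρ * h := mul_le_mul_of_nonneg_right hb1 hh0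
      have h4 : κ * h ^ 2 ≤ κ * (Lam / δ) * h := by
        have := mul_le_mul_of_nonneg_left (mul_le_mul_of_nonneg_right hhL hh0) hκ.le
        nlinarith
      rw [e2]; linarith
    calc A l ≤ ENNReal.ofReal (lineAvg δ μ l) * ENNReal.ofReal h := by rw [← hmh]; exact hmin
      _ = ENNReal.ofReal (lineAvg δ μ l * h) := (ENNReal.ofReal_mul ha0).symm
      _ ≤ ENNReal.ofReal ((1 / ρ + κ * (Lam / δ)) * h + D l ^ 2 / κ) :=
          ENNReal.ofReal_le_ofReal hreal
      _ = ENNReal.ofReal (1 / ρ + κ * (Lam / δ)) * m + ENNReal.ofReal (D l ^ 2 / κ) := by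
          rw [ENNReal.ofReal_add (by positivity) (by positivity),
            ENNReal.ofReal_mul (by positivity), ← hmh]
      _ ≤ _ := by
          gcongr
          exact min_le_left _ _
  have hDi : ∫⁻ l, ENNReal.ofReal (D l ^ 2 / κ) ∂lineM ≤
      ENNReal.ofReal (256 * cE C τ * ρ ^ τ / κ) := by
    rw [← ofReal_integral_eq_lintegral_ofReal]
    · apply ENNReal.ofReal_le_ofReal
      rw [integral_div]
      gcongr
      exact L2_bound hC hF hμ1 hδ hδρ (by linarith) hτ hτ1 ht ht2
    · refine integrable_lineM (B := (1 / δ + 1 / ρ) ^ 2 / κ) ((hDm.pow_const 2).div_const κ)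
        fun l => ?_
      rw [abs_of_nonneg (by positivity)]
      gcongr ?_ / κ
      rw [← sq_abs]
      gcongr
      refine (abs_sub _ _).trans ?_
      rw [abs_of_nonneg (lineAvg_nonneg hδ μ l), abs_of_nonneg (lineAvg_nonneg hρ0 μ l)]
      exact add_le_add (lineAvg_le hδ μ l) (lineAvg_le hρ0 μ l)
    · exact Filter.Eventually.of_forall fun l => by simp only [Pi.zero_apply]; positivity
  have hcE := cE_nonneg hC hτ
  calc (μ.prod ν) B ≤ 2 * ∫⁻ l, A l ∂lineM := h1
    _ ≤ 2 * ∫⁻ l, (ENNReal.ofReal (1 / ρ + κ * (Lam / δ)) * farCount δ r₀ lam ν l +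
          ENNReal.ofReal (D l ^ 2 / κ)) ∂lineM := by gcongr; exact hA3 _
    _ = 2 * (ENNReal.ofReal (1 / ρ + κ * (Lam / δ)) * ∫⁻ l, farCount δ r₀ lam ν l ∂lineM +
          ∫⁻ l, ENNReal.ofReal (D l ^ 2 / κ) ∂lineM) := by
        rw [lintegral_add_right _ ((hDm.pow_const 2).div_const κ).ennreal_ofReal,
          lintegral_const_mul' _ _ ENNReal.ofReal_ne_top]
    _ ≤ 2 * (ENNReal.ofReal (1 / ρ + κ * (Lam / δ)) * ENNReal.ofReal (4608 * δ / (lam * r₀)) +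
          ENNReal.ofReal (256 * cE C τ * ρ ^ τ / κ)) := by
        gcongr
        exact lintegral_farCount hν1 hδ hδ1 hr₀ hl
    _ = _ := by
        rw [← ENNReal.ofReal_mul (by positivity), ← ENNReal.ofReal_add (by positivity)
          (by positivity), ENNReal.ofReal_mul (p := 2) (by norm_num), ENNReal.ofReal_ofNat]

/-! ### The bootstrap -/

/-- The standing assumptions on the two measures. The Frostman condition with exponent `s` is
required of both, so that the roles of `μ` and `ν` can be exchanged in `level_dual`. -/
structure Adm (C s t : ℝ) (μ ν : Measure E2) : Prop where
  prob_left : IsProbabilityMeasure μ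
  prob_right : IsProbabilityMeasure ν
  frost_t : Frost C t μ
  frost_left : Frost C s μ
  frost_right : Frost C s ν
  null_left : μ (closedBall 0 1)ᶜ = 0
  null_right : ν (closedBall 0 1)ᶜ = 0
  sep : ∀ᵐ p ∂(μ.prod ν), 1 / 2 ≤ dist p.1 p.2

lemma ae_norm_le {ω : Measure E2} (h : ω (closedBall 0 1)ᶜ = 0) : ∀ᵐ x ∂ω, ‖x‖ ≤ 1 := by
  rw [ae_iff]; convert h using 2; ext x; simp

lemma Adm.ae_good {C s t : ℝ} {μ ν : Measure E2} (h : Adm C s t μ ν) :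
    ∀ᵐ p ∂(μ.prod ν), 1 / 2 ≤ dist p.1 p.2 ∧ ‖p.1‖ ≤ 1 ∧ ‖p.2‖ ≤ 1 := by
  have := h.prob_left
  have := h.prob_right
  filter_upwards [h.sep, Measure.quasiMeasurePreserving_fst.ae (ae_norm_le h.null_left),
    Measure.quasiMeasurePreserving_snd.ae (ae_norm_le h.null_right)] with p h1 h2 h3
  exact ⟨h1, h2, h3⟩

lemma Tail.mono_exp {K η σ σ' : ℝ} {μ ν ω : Measure E2} (h : Tail K η σ μ ν ω) (hσ : σ' ≤ σ) :
    Tail K η σ' μ ν ω := by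
  intro M hM
  refine (measure_mono ?_).trans (h M hM)
  rintro p ⟨j, hj⟩
  refine ⟨j, lt_of_le_of_lt (ENNReal.ofReal_le_ofReal ?_) hj⟩
  refine mul_le_mul_of_nonneg_left ?_ (by linarith)
  exact Real.rpow_le_rpow_of_exponent_ge (by positivity)
    (pow_le_one₀ (by norm_num) (by norm_num)) hσ

/-- A strip has mass at most `1`, so nothing is bad for the exponent `0`. -/
lemma tail_zero (μ ν ω : Measure E2) [IsProbabilityMeasure ω] : Tail 1 1 0 μ ν ω := by
  intro M hM
  have : badSet 0 M ω = ∅ := by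
    ext p
    simp only [badSet, Set.mem_ofPred_eq, Set.mem_empty_iff_false, iff_false, not_exists, not_lt,
      Real.rpow_zero, mul_one]
    intro j
    refine prob_le_one.trans ?_
    rw [← ENNReal.ofReal_one]
    exact ENNReal.ofReal_le_ofReal hM
  rw [this]; simp

/-- A power bound, at each scale, for the set of pairs with a heavy strip. -/
def Level (K a σ : ℝ) (μ ν ω : Measure E2) : Prop :=
  ∀ δ : ℝ, 0 < δ → δ ≤ 1 →
    (μ.prod ν) {p | ENNReal.ofReal (δ ^ σ) < ω (strip δ p.1 p.2)} ≤ ENNReal.ofReal (K * δ ^ a)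

/-- Summation over dyadic scales. Strips have mass at most `1`, so those of width `d` matter for `M`
only if `d < 1 / M`, and then `d ^ a ≤ M ^ (-a / 2) * d ^ (a / 2)`. -/
lemma Level.tail {K a σ : ℝ} {μ ν ω : Measure E2} [IsProbabilityMeasure ω]
    (h : Level K a σ μ ν ω) (hK : 0 ≤ K) (ha : 0 < a) (hσ1 : σ ≤ 1) :
    Tail (K / (1 - (1 / 2) ^ (a / 2))) (a / 2) σ μ ν ω := by
  intro M hM
  have hM0 : 0 < M := by linarith
  have hb0 : (0:ℝ) ≤ (1 / 2) ^ (a / 2) := by positivity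
  have hb1 : ((1:ℝ) / 2) ^ (a / 2) < 1 :=
    Real.rpow_lt_one (by norm_num) (by norm_num) (by linarith)
  have hsub : badSet σ M ω ⊆ ⋃ j : ℕ, {p : E2 × E2 |
      ENNReal.ofReal (M * ((1 / 2 : ℝ) ^ j) ^ σ) < ω (strip ((1 / 2 : ℝ) ^ j) p.1 p.2)} := by
    rintro p ⟨j, hj⟩
    exact Set.mem_iUnion.2 ⟨j, hj⟩
  have hj : ∀ j : ℕ, (μ.prod ν) {p : E2 × E2 |
      ENNReal.ofReal (M * ((1 / 2 : ℝ) ^ j) ^ σ) < ω (strip ((1 / 2 : ℝ) ^ j) p.1 p.2)} ≤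
      ENNReal.ofReal (K * M ^ (-(a / 2)) * ((1 / 2) ^ (a / 2)) ^ j) := by
    intro j
    set d : ℝ := (1 / 2 : ℝ) ^ j with hd
    have hd0 : 0 < d := by positivity
    have hd1 : d ≤ 1 := pow_le_one₀ (by norm_num) (by norm_num)
    rcases le_or_gt 1 (M * d) with h1 | h1
    · have : {p : E2 × E2 | ENNReal.ofReal (M * d ^ σ) < ω (strip d p.1 p.2)} = ∅ := by
        ext p
        simp only [Set.mem_ofPred_eq, Set.mem_empty_iff_false, iff_false, not_lt]
        refine prob_le_one.trans ?_
        rw [← ENNReal.ofReal_one]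
        refine ENNReal.ofReal_le_ofReal (h1.trans ?_)
        gcongr
        calc d = d ^ (1:ℝ) := (Real.rpow_one d).symm
          _ ≤ d ^ σ := Real.rpow_le_rpow_of_exponent_ge hd0 hd1 hσ1
      rw [this]; simp
    · calc _ ≤ (μ.prod ν) {p | ENNReal.ofReal (d ^ σ) < ω (strip d p.1 p.2)} := by
            apply measure_mono
            intro p hp
            refine lt_of_le_of_lt (ENNReal.ofReal_le_ofReal ?_) hp
            have : 0 ≤ d ^ σ := by positivity
            nlinarith
        _ ≤ ENNReal.ofReal (K * d ^ a) := h d hd0 hd1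
        _ ≤ _ := by
            apply ENNReal.ofReal_le_ofReal
            have e1 : d ^ a = d ^ (a / 2) * d ^ (a / 2) := by
              rw [← Real.rpow_add hd0]; ring_nf
            have e2 : d ^ (a / 2) = ((1 / 2 : ℝ) ^ (a / 2)) ^ j := by
              rw [hd, ← Real.rpow_natCast, ← Real.rpow_natCast, ← Real.rpow_mul (by norm_num),
                ← Real.rpow_mul (by norm_num), mul_comm]
            have e3 : d ^ (a / 2) ≤ M ^ (-(a / 2)) := by
              rw [Real.rpow_neg hM0.le, ← Real.inv_rpow hM0.le]
              apply Real.rpow_le_rpow hd0.le _ (by linarith)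
              rw [← one_div, le_div_iff₀ hM0]; linarith
            rw [e1, ← e2, mul_assoc]
            gcongr
  calc (μ.prod ν) (badSet σ M ω) ≤ ∑' j : ℕ, (μ.prod ν) {p : E2 × E2 |
      ENNReal.ofReal (M * ((1 / 2 : ℝ) ^ j) ^ σ) < ω (strip ((1 / 2 : ℝ) ^ j) p.1 p.2)} :=
        (measure_mono hsub).trans (measure_iUnion_le _)
    _ ≤ ∑' j : ℕ, ENNReal.ofReal (K * M ^ (-(a / 2)) * ((1 / 2) ^ (a / 2)) ^ j) :=
        ENNReal.tsum_le_tsum hj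
    _ = _ := by
        rw [← ENNReal.ofReal_tsum_of_nonneg (fun j => by positivity)
          ((summable_geometric_of_lt_one hb0 hb1).mul_left _), tsum_mul_left,
          tsum_geometric_of_lt_one hb0 hb1]
        congr 1
        rw [div_eq_mul_inv]; ring

/-- Thin strips for `μ` of exponent `σ` give thin strips for `ν`, with a small loss. -/
lemma level_dual {C s σ g K η e : ℝ} {μ ν : Measure E2} [IsProbabilityMeasure μ]
    [IsProbabilityMeasure ν] (hC : 0 ≤ C) (hF : Frost C s ν) (hμ1 : μ (closedBall 0 1)ᶜ = 0)
    (hν1 : ν (closedBall 0 1)ᶜ = 0) (hσ : 0 ≤ σ) (hg : 0 < g) (hsg : σ + g ≤ s) (hs : s ≤ 1)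
    (hK : 0 ≤ K) (hη1 : η ≤ 1) (he : 0 < e) (hT : Tail K η σ μ ν μ) :
    Level (K + 16 * cE C g) (e * η) (σ - 2 * e) μ ν ν := by
  intro δ hδ hδ1
  have hcE := cE_nonneg hC hg
  have hM : 1 ≤ δ ^ (-e) := Real.one_le_rpow_of_pos_of_le_one_of_nonpos hδ hδ1 (by linarith)
  have h := transfer hC hF hσ (by linarith) hg hsg hμ1 hν1 hT hM hδ
    (lam := δ ^ (σ - 2 * e)) (by positivity) (r₀ := 2) (by norm_num) hK
  have hgood : ∀ᵐ p ∂(μ.prod ν), ‖p.2‖ ≤ 1 :=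
    Measure.quasiMeasurePreserving_snd.ae (ae_norm_le hν1)
  have hle : (μ.prod ν) {p | ENNReal.ofReal (δ ^ (σ - 2 * e)) < ν (strip δ p.1 p.2)} ≤
      (μ.prod ν) {p | ENNReal.ofReal (δ ^ (σ - 2 * e)) <
        ν (strip δ p.1 p.2 ∩ closedBall p.2 2)} := by
    apply measure_mono_ae
    filter_upwards [hgood] with p hp hlt
    refine lt_of_lt_of_eq hlt (measure_congr ?_)
    filter_upwards [ae_norm_le hν1] with x hx
    refine propext ⟨fun hxs => ⟨hxs, ?_⟩, fun hxs => hxs.1⟩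
    rw [mem_closedBall, dist_eq_norm]
    exact (norm_sub_le _ _).trans (by linarith)
  refine (hle.trans h).trans (ENNReal.ofReal_le_ofReal ?_)
  have e1 : (δ ^ (-e)) ^ (-η) = δ ^ (e * η) := by
    rw [← Real.rpow_mul hδ.le]; ring_nf
  have e2 : δ ^ (-e) * δ ^ σ * 2 ^ (s - σ) / δ ^ (σ - 2 * e) = 2 ^ (s - σ) * δ ^ e := by
    have : δ ^ e = δ ^ (-e) * δ ^ σ / δ ^ (σ - 2 * e) := by
      rw [← Real.rpow_add hδ, ← Real.rpow_sub hδ]; ring_nf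
    rw [this]; ring
  have e3 : (2:ℝ) ^ (s - σ) ≤ 2 := by
    calc (2:ℝ) ^ (s - σ) ≤ 2 ^ (1:ℝ) :=
          Real.rpow_le_rpow_of_exponent_le (by norm_num) (by linarith)
      _ = 2 := by norm_num
  have e4 : δ ^ e ≤ δ ^ (e * η) :=
    Real.rpow_le_rpow_of_exponent_ge hδ hδ1 (by nlinarith)
  rw [e1, e2]
  calc K * δ ^ (e * η) + 8 * cE C g * (2 ^ (s - σ) * δ ^ e)
      ≤ K * δ ^ (e * η) + 8 * cE C g * (2 * δ ^ (e * η)) := by gcongr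
    _ = _ := by ring

set_option maxHeartbeats 1000000 in
/-- Thin strips for `μ` of exponent `σ` give thin strips for `ν` with a *gain* in the exponent:
this is where the dimension of `μ` exceeding `1` enters. A pair `(q, y)` with
`ν (strip δ q y) > δ ^ (σ + e)` is of one of three kinds: much of this mass is within `r₀` of `y`;
or the strip of width `8 δ` has mass above `Lam`; or the pair is in `richSet`. The first two are
rare by `transfer`, the third by `incidence`. -/
lemma level_gain {C s t σ g τ K η e : ℝ} {μ ν : Measure E2} (hA : Adm C s t μ ν) (hC : 0 ≤ C)
    (hσ : 0 ≤ σ) (hg : 0 < g) (hg1 : g ≤ 1) (hsg : σ + g ≤ s) (hs : s ≤ 1) (hτ : 0 < τ)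
    (hτ1 : τ ≤ 1) (ht : 1 + τ + τ ≤ t) (ht2 : t ≤ 2) (hK : 0 ≤ K) (hη1 : η ≤ 1)
    (he : e = g ^ 2 * τ / 100) (hT : Tail K η σ μ ν μ) :
    Level (2 * K + 144 * cE C g + 36864 + 512 * cE C τ) (e * η) (σ + e) μ ν ν := by
  have := hA.prob_left
  have := hA.prob_right
  intro δ hδ hδ1
  have hcE := cE_nonneg hC hg
  have hcE' := cE_nonneg hC hτ
  have he0 : 0 < e := by rw [he]; positivity
  have hgg : g ^ 2 ≤ g := by nlinarith
  have heg : e ≤ g * τ / 100 := by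
    rw [he]
    have := mul_le_mul_of_nonneg_right hgg hτ.le
    linarith
  have hgτ : g * τ ≤ g := by nlinarith
  have heη : e * η ≤ e := by nlinarith
  have hd : δ ^ e ≤ δ ^ (e * η) := Real.rpow_le_rpow_of_exponent_ge hδ hδ1 heη
  rcases lt_or_ge (1 / 16) δ with h16 | h16
  · refine prob_le_one.trans ?_
    rw [← ENNReal.ofReal_one]
    apply ENNReal.ofReal_le_ofReal
    have h1 : δ ≤ δ ^ (e * η) := by
      calc δ = δ ^ (1:ℝ) := (Real.rpow_one δ).symm
        _ ≤ _ := Real.rpow_le_rpow_of_exponent_ge hδ hδ1 (by nlinarith)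
    nlinarith
  -- `r₀ ^ g = δ ^ (3 e)` compensates the losses of `transfer` for close pairs. In `incidence` the
  -- powers of `1 / r₀`, `1 / lam` and `Lam` cost `O(e / g)` in the exponent, a small multiple of
  -- `g τ`, whereas `κ` and `ρ ^ τ / κ` gain `g τ / 4`, and `σ + g ≤ 1` makes `δ / ρ` affordable
  set M := δ ^ (-e) with hMdef
  set lam := δ ^ (σ + e) / 2 with hlam
  set Lam := δ ^ (σ - 2 * e) with hLam
  set r₀ := δ ^ (3 * e / g) with hr₀
  set ρ := δ ^ (g / 2) with hρ
  set κ := ρ ^ (τ / 2) with hκ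
  have hM : 1 ≤ M := Real.one_le_rpow_of_pos_of_le_one_of_nonpos hδ hδ1 (by linarith)
  have hlam0 : 0 < lam := by positivity
  have hLam0 : 0 < Lam := by positivity
  have hr₀0 : 0 < r₀ := by positivity
  have hρ0 : 0 < ρ := by positivity
  have hκ0 : 0 < κ := by positivity
  have hρ1 : ρ ≤ 1 := Real.rpow_le_one hδ.le hδ1 (by linarith)
  have hδρ : δ ≤ ρ := by
    calc δ = δ ^ (1:ℝ) := (Real.rpow_one δ).symm
      _ ≤ _ := Real.rpow_le_rpow_of_exponent_ge hδ hδ1 (by linarith)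
  have hMη : M ^ (-η) = δ ^ (e * η) := by
    rw [hMdef, ← Real.rpow_mul hδ.le]; ring_nf
  -- close pairs are few
  have hZ2 : (μ.prod ν) {p | ENNReal.ofReal lam < ν (strip δ p.1 p.2 ∩ closedBall p.2 r₀)} ≤
      ENNReal.ofReal ((K + 16 * cE C g) * δ ^ (e * η)) := by
    refine (transfer hC hA.frost_right hσ (by linarith) hg hsg hA.null_left hA.null_right hT hM hδ
      hlam0 hr₀0 hK).trans (ENNReal.ofReal_le_ofReal ?_)
    have e2 : M * δ ^ σ * r₀ ^ (s - σ) / lam = 2 * δ ^ (-e + σ + 3 * e / g * (s - σ) - (σ + e)) := by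
      rw [hMdef, hr₀, hlam, ← Real.rpow_mul hδ.le, Real.rpow_sub hδ,
        Real.rpow_add hδ (-e + σ), Real.rpow_add hδ (-e)]
      ring
    have e3 : δ ^ (-e + σ + 3 * e / g * (s - σ) - (σ + e)) ≤ δ ^ e := by
      apply Real.rpow_le_rpow_of_exponent_ge hδ hδ1
      have : 3 * e ≤ 3 * e / g * (s - σ) := by
        rw [div_mul_eq_mul_div, le_div_iff₀ hg]
        exact mul_le_mul_of_nonneg_left (by linarith) (by linarith)
      linarith
    rw [hMη, e2]
    have e4 := mul_le_mul_of_nonneg_left (e3.trans hd) (by positivity : 0 ≤ 16 * cE C g)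
    linarith
  -- slightly wider strips rarely have much more than the expected mass
  have hZ1 : (μ.prod ν) {p | ENNReal.ofReal Lam < ν (strip (8 * δ) p.1 p.2 ∩ closedBall p.2 2)} ≤
      ENNReal.ofReal ((K + 128 * cE C g) * δ ^ (e * η)) := by
    refine (transfer hC hA.frost_right hσ (by linarith) hg hsg hA.null_left hA.null_right hT hM
      (by positivity) hLam0 (by norm_num) hK).trans (ENNReal.ofReal_le_ofReal ?_)
    have e2 : M * (8 * δ) ^ σ * 2 ^ (s - σ) / Lam = 8 ^ σ * 2 ^ (s - σ) * δ ^ e := by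
      rw [Real.mul_rpow (by norm_num) hδ.le, hMdef, hLam]
      have : δ ^ e = δ ^ (-e) * δ ^ σ / δ ^ (σ - 2 * e) := by
        rw [← Real.rpow_add hδ, ← Real.rpow_sub hδ]; ring_nf
      rw [this]; ring
    have e3 : (2:ℝ) ^ (s - σ) ≤ 2 := by
      calc (2:ℝ) ^ (s - σ) ≤ 2 ^ (1:ℝ) :=
            Real.rpow_le_rpow_of_exponent_le (by norm_num) (by linarith)
        _ = 2 := by norm_num
    have e4 : (8:ℝ) ^ σ ≤ 8 := by
      calc (8:ℝ) ^ σ ≤ 8 ^ (1:ℝ) :=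
            Real.rpow_le_rpow_of_exponent_le (by norm_num) (by linarith)
        _ = 8 := by norm_num
    rw [hMη, e2]
    calc K * δ ^ (e * η) + 8 * cE C g * (8 ^ σ * 2 ^ (s - σ) * δ ^ e)
        ≤ K * δ ^ (e * η) + 8 * cE C g * (8 * 2 * δ ^ (e * η)) := by gcongr
      _ = _ := by ring
  have hB : (μ.prod ν) (richSet δ r₀ lam Lam ν) ≤
      ENNReal.ofReal ((36864 + 512 * cE C τ) * δ ^ (e * η)) := by
    refine (incidence hC hA.frost_t hA.null_left hA.null_right hδ hδρ hρ1 h16 hτ hτ1 ht ht2 hr₀0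
      hlam0 hLam0 hκ0).trans (ENNReal.ofReal_le_ofReal ?_)
    have hκδ : κ = δ ^ (g * τ / 4) := by
      rw [hκ, hρ, ← Real.rpow_mul hδ.le]; ring_nf
    have h3 : 3 * e / g ≤ 3 * τ * g / 100 := by
      rw [div_le_iff₀ hg, he]; apply le_of_eq; ring
    have hτg : τ * g = g * τ := mul_comm _ _
    have ea : 1 / ρ * (4608 * δ / (lam * r₀)) =
        9216 * δ ^ (1 - g / 2 - (σ + e) - 3 * e / g) := by
      rw [hρ, hlam, hr₀, Real.rpow_sub hδ, Real.rpow_sub hδ, Real.rpow_sub hδ, Real.rpow_one]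
      field_simp
      norm_num
    have eb : κ * (Lam / δ) * (4608 * δ / (lam * r₀)) =
        9216 * δ ^ (g * τ / 4 + (σ - 2 * e) - (σ + e) - 3 * e / g) := by
      have hsplit : δ ^ (g * τ / 4 + (σ - 2 * e) - (σ + e) - 3 * e / g) =
          κ * Lam / δ ^ (σ + e) / r₀ := by
        rw [hκδ, hLam, hr₀, Real.rpow_sub hδ, Real.rpow_sub hδ, Real.rpow_add hδ]
      have hx : 0 < δ ^ (σ + e) := by positivity
      rw [hsplit, hlam]
      generalize δ ^ (σ + e) = x at hx
      generalize κ = y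
      generalize Lam = z
      generalize r₀ = w at hr₀0
      field_simp
      ring
    have ec : ρ ^ τ / κ = δ ^ (g * τ / 4) := by
      rw [hκ, ← Real.rpow_sub hρ0, hρ, ← Real.rpow_mul hδ.le]; ring_nf
    have la : δ ^ (1 - g / 2 - (σ + e) - 3 * e / g) ≤ δ ^ (e * η) :=
      Real.rpow_le_rpow_of_exponent_ge hδ hδ1 (by linarith)
    have lb : δ ^ (g * τ / 4 + (σ - 2 * e) - (σ + e) - 3 * e / g) ≤ δ ^ (e * η) :=
      Real.rpow_le_rpow_of_exponent_ge hδ hδ1 (by linarith)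
    have lc : δ ^ (g * τ / 4) ≤ δ ^ (e * η) :=
      Real.rpow_le_rpow_of_exponent_ge hδ hδ1 (by linarith)
    have lc' := mul_le_mul_of_nonneg_left lc (by positivity : 0 ≤ 256 * cE C τ)
    rw [mul_div_assoc (256 * cE C τ), ec, add_mul, ea, eb]
    linarith
  have hcover : (μ.prod ν) {p | ENNReal.ofReal (δ ^ (σ + e)) < ν (strip δ p.1 p.2)} ≤
      (μ.prod ν) ({p | ENNReal.ofReal lam < ν (strip δ p.1 p.2 ∩ closedBall p.2 r₀)} ∪
        {p | ENNReal.ofReal Lam < ν (strip (8 * δ) p.1 p.2 ∩ closedBall p.2 2)} ∪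
        richSet δ r₀ lam Lam ν) := by
    apply measure_mono_ae
    filter_upwards [hA.ae_good] with p hp hlt
    by_contra hcon
    have hcon1 : ν (strip δ p.1 p.2 ∩ closedBall p.2 r₀) ≤ ENNReal.ofReal lam :=
      not_lt.1 fun h => hcon (Or.inl (Or.inl h))
    have hcon2 : ν (strip (8 * δ) p.1 p.2 ∩ closedBall p.2 2) ≤ ENNReal.ofReal Lam :=
      not_lt.1 fun h => hcon (Or.inl (Or.inr h))
    have hLamle : ν (strip (8 * δ) p.1 p.2) ≤ ENNReal.ofReal Lam := by
      refine le_trans (le_of_eq (measure_congr ?_)) hcon2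
      filter_upwards [ae_norm_le hA.null_right] with x hx
      refine propext ⟨fun hxs => ⟨hxs, ?_⟩, fun hxs => hxs.1⟩
      rw [mem_closedBall, dist_eq_norm]
      exact (norm_sub_le _ _).trans (by linarith [hp.2.2])
    have hcon3 : ν (strip δ p.1 p.2 \ closedBall p.2 r₀) ≤ ENNReal.ofReal lam :=
      not_lt.1 fun h => hcon (Or.inr ⟨hp, h, hLamle⟩)
    have hlt' : ENNReal.ofReal (δ ^ (σ + e)) < ν (strip δ p.1 p.2) := hlt
    refine absurd hlt' (not_lt.2 ?_)
    calc ν (strip δ p.1 p.2) ≤ ν (strip δ p.1 p.2 ∩ closedBall p.2 r₀) +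
          ν (strip δ p.1 p.2 \ closedBall p.2 r₀) := measure_le_inter_add_sdiff _ _ _
      _ ≤ ENNReal.ofReal lam + ENNReal.ofReal lam := add_le_add hcon1 hcon3
      _ = ENNReal.ofReal (δ ^ (σ + e)) := by
          rw [← ENNReal.ofReal_add hlam0.le hlam0.le, hlam]; ring_nf
  calc _ ≤ _ := hcover
    _ ≤ ENNReal.ofReal ((K + 16 * cE C g) * δ ^ (e * η)) +
          ENNReal.ofReal ((K + 128 * cE C g) * δ ^ (e * η)) +
          ENNReal.ofReal ((36864 + 512 * cE C τ) * δ ^ (e * η)) := by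
        refine (measure_union_le _ _).trans (add_le_add ?_ hB)
        exact (measure_union_le _ _).trans (add_le_add hZ2 hZ1)
    _ = _ := by
        rw [← ENNReal.ofReal_add (by positivity) (by positivity),
          ← ENNReal.ofReal_add (by positivity) (by positivity)]
        congr 1; ring

/-- Tail bounds for `μ` of exponent `σ`, uniform over the admissible pairs. -/
def Unif (C s t σ : ℝ) : Prop :=
  ∃ K η : ℝ, 0 ≤ K ∧ 0 < η ∧ η ≤ 1 ∧ ∀ μ ν, Adm C s t μ ν → Tail K η σ μ ν μ

lemma exists_tail_right {C s t σ g τ e : ℝ} (hC : 0 ≤ C)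
    (hσ : 0 ≤ σ) (hg : 0 < g) (hg1 : g ≤ 1) (hsg : σ + g ≤ s) (hs : s ≤ 1) (hτ : 0 < τ)
    (hτ1 : τ ≤ 1) (ht : 1 + τ + τ ≤ t) (ht2 : t ≤ 2) (he : e = g ^ 2 * τ / 100)
    (hσe : σ + e ≤ 1) (h : Unif C s t σ) :
    ∃ K η : ℝ, 0 ≤ K ∧ 0 < η ∧ η ≤ 1 ∧ ∀ μ ν, Adm C s t μ ν → Tail K η (σ + e) μ ν ν := by
  obtain ⟨K, η, hK, hη0, hη1, hT⟩ := h
  have he0 : 0 < e := by rw [he]; positivity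
  have hcE := cE_nonneg hC hg
  have hcE' := cE_nonneg hC hτ
  have hb1 : ((1:ℝ) / 2) ^ (e * η / 2) < 1 :=
    Real.rpow_lt_one (by norm_num) (by norm_num) (by positivity)
  refine ⟨(2 * K + 144 * cE C g + 36864 + 512 * cE C τ) / (1 - (1 / 2) ^ (e * η / 2)), e * η / 2,
    div_nonneg (by positivity) (by linarith), by positivity, by nlinarith, fun μ ν hA => ?_⟩
  · have := hA.prob_right
    exact (level_gain hA hC hσ hg hg1 hsg hs hτ hτ1 ht ht2 hK hη1 he (hT μ ν hA)).tail
      (by positivity) (by positivity) hσe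

/-- One round of the bootstrap: `level_gain` passes from `μ` to `ν` and gains `e`, then `level_dual`
passes back to `μ` and loses `e / 2`. -/
lemma Unif.step {C s t σ g τ e : ℝ} (hC : 0 ≤ C)
    (hσ : 0 ≤ σ) (hg : 0 < g) (hg1 : g ≤ 1) (hsg : σ + 2 * g ≤ s) (hs : s ≤ 1) (hτ : 0 < τ)
    (hτ1 : τ ≤ 1) (ht : 1 + τ + τ ≤ t) (ht2 : t ≤ 2) (he : e = g ^ 2 * τ / 100)
    (h : Unif C s t σ) : Unif C s t (σ + e / 2) := by
  have he0 : 0 < e := by rw [he]; positivity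
  have heg : e ≤ g := by
    have h1 : g ^ 2 * τ ≤ g * 1 := mul_le_mul (by nlinarith) hτ1 hτ.le hg.le
    rw [he]; linarith
  obtain ⟨K, η, hK, hη0, hη1, hT⟩ := exists_tail_right hC hσ hg hg1 (by linarith) hs hτ hτ1 ht ht2
    he (by linarith) h
  have hcE := cE_nonneg hC hg
  have hb1 : ((1:ℝ) / 2) ^ (e / 4 * η / 2) < 1 :=
    Real.rpow_lt_one (by norm_num) (by norm_num) (by positivity)
  refine ⟨(K + 16 * cE C g) / (1 - (1 / 2) ^ (e / 4 * η / 2)), e / 4 * η / 2,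
    div_nonneg (by positivity) (by linarith), by positivity, by nlinarith, fun μ ν hA => ?_⟩
  · have := hA.prob_left
    have := hA.prob_right
    have h1 := level_dual hC hA.frost_left hA.null_right hA.null_left (by linarith) hg
      (by linarith : σ + e + g ≤ s) hs hK hη1 (e := e / 4) (by linarith) (hT μ ν hA).swap
    have h2 := (h1.tail (by positivity) (by positivity) (by linarith)).swap
    rwa [show σ + e - 2 * (e / 4) = σ + e / 2 by ring] at h2

/-- Iterating `Unif.step` from the exponent `0` reaches `σ`, and one more use of `level_gain` passes
to `ν`. The gap `g` and hence the gain stay fixed as long as the exponent is at most `σ < s`. -/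
lemma exists_tail {C s t σ : ℝ} (hC : 0 ≤ C) (hσ : 0 < σ) (hσs : σ < s) (hs : s ≤ 1) (ht : 1 < t)
    (ht2 : t ≤ 2) :
    ∃ K η : ℝ, 0 ≤ K ∧ 0 < η ∧ η ≤ 1 ∧ ∀ μ ν, Adm C s t μ ν → Tail K η σ μ ν ν := by
  set g := (s - σ) / 2 with hg
  set τ := (t - 1) / 2 with hτ
  set e := g ^ 2 * τ / 100 with he
  have hg0 : 0 < g := by rw [hg]; linarith
  have hg1 : g ≤ 1 := by rw [hg]; linarith
  have hτ0 : 0 < τ := by rw [hτ]; linarith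
  have hτ1 : τ ≤ 1 := by rw [hτ]; linarith
  have he0 : 0 < e := by positivity
  have hind : ∀ n : ℕ, Unif C s t (min (n * (e / 2)) σ) := by
    intro n
    induction n with
    | zero =>
      refine ⟨1, 1, by norm_num, by norm_num, le_rfl, fun μ ν hA => ?_⟩
      have := hA.prob_left
      have h0 : min (((0:ℕ):ℝ) * (e / 2)) σ = 0 := by simp [hσ.le]
      rw [h0]
      exact tail_zero μ ν μ
    | succ n ih =>
      have hmin : min (n * (e / 2)) σ ≤ σ := min_le_right _ _
      obtain ⟨K, η, hK, hη0, hη1, hT⟩ := ih.step hC (g := g) (τ := τ) (e := e)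
        (le_min (by positivity) hσ.le) hg0 hg1 (by linarith) hs hτ0 hτ1 (by linarith) ht2 he
      refine ⟨K, η, hK, hη0, hη1, fun μ ν hA => (hT μ ν hA).mono_exp ?_⟩
      push_cast
      rcases min_choice (n * (e / 2)) σ with h | h <;> rw [h]
      · refine (min_le_left _ _).trans (le_of_eq (by ring))
      · refine (min_le_right _ _).trans (by linarith)
  obtain ⟨n, hn⟩ := exists_nat_ge (σ / (e / 2))
  have hn' : σ ≤ n * (e / 2) := by rwa [div_le_iff₀ (by positivity)] at hn
  have hU := hind n
  rw [min_eq_right hn'] at hU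
  have heg : e ≤ g := by
    have h1 : g ^ 2 * τ ≤ g * 1 := mul_le_mul (by nlinarith) hτ1 hτ0.le hg0.le
    rw [he]; linarith
  obtain ⟨K, η, hK, hη0, hη1, hT⟩ := exists_tail_right hC hσ.le hg0 hg1 (by linarith) hs hτ0 hτ1
    (by linarith) ht2 he (by linarith) hU
  exact ⟨K, η, hK, hη0, hη1, fun μ ν hA => (hT μ ν hA).mono_exp (by linarith)⟩

/-! ### From strips to radial projections -/

lemma measure_compl_spt (μ : Measure E2) : μ (spt μ)ᶜ = 0 := by
  apply measure_null_of_locally_null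
  intro x hx
  simp only [spt, Set.mem_compl_iff, Set.mem_ofPred_eq, not_forall, not_lt, nonpos_iff_eq_zero]
    at hx
  obtain ⟨r, hr, h⟩ := hx
  exact ⟨ball x r, mem_nhdsWithin_of_mem_nhds (ball_mem_nhds x hr), h⟩

lemma norm_le_of_mem_spt {μ : Measure E2} (h : μ (closedBall 0 1)ᶜ = 0) {q : E2} (hq : q ∈ spt μ) :
    ‖q‖ ≤ 1 := by
  by_contra hcon
  have hcon : 1 < ‖q‖ := not_le.1 hcon
  refine (hq (‖q‖ - 1) (by linarith)).ne' (measure_mono_null ?_ h)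
  intro x hx hx1
  rw [mem_ball, dist_comm, dist_eq_norm] at hx
  rw [mem_closedBall, dist_zero_right] at hx1
  have := norm_sub_norm_le q x
  linarith

/-- The sine of the angle at `q` is at most the distance of the projections. -/
lemma abs_crossD_le_radProj {q x y : E2} (hqx : q ≠ x) (hqy : q ≠ y) (hq : ‖q‖ ≤ 1) (hx : ‖x‖ ≤ 1)
    (hy : ‖y‖ ≤ 1) : |crossD q y x| ≤ 4 * dist (radProj q x) (radProj q y) := by
  have h1 : 0 < ‖q - x‖ := norm_pos_iff.2 (sub_ne_zero.2 hqx)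
  have h2 : 0 < ‖q - y‖ := norm_pos_iff.2 (sub_ne_zero.2 hqy)
  have h3 : ‖q - x‖ ≤ 2 := (norm_sub_le _ _).trans (by linarith)
  have h4 : ‖q - y‖ ≤ 2 := (norm_sub_le _ _).trans (by linarith)
  set u := radProj q y with hu
  set v := radProj q x with hv
  have hun : ‖u‖ = 1 := by
    rw [hu, radProj, norm_smul, norm_inv, norm_norm, inv_mul_cancel₀ h2.ne']
  have hx' : q - x = ‖q - x‖ • v := by
    rw [hv, radProj, smul_smul, mul_inv_cancel₀ h1.ne', one_smul]
  have hy' : q - y = ‖q - y‖ • u := by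
    rw [hu, radProj, smul_smul, mul_inv_cancel₀ h2.ne', one_smul]
  have e : crossD q y x = ‖q - y‖ * ‖q - x‖ * (u 0 * (v - u) 1 - u 1 * (v - u) 0) := by
    have a0 : q 0 - x 0 = ‖q - x‖ * v 0 := by simpa using congrArg (fun w : E2 => w 0) hx'
    have a1 : q 1 - x 1 = ‖q - x‖ * v 1 := by simpa using congrArg (fun w : E2 => w 1) hx'
    have b0 : q 0 - y 0 = ‖q - y‖ * u 0 := by simpa using congrArg (fun w : E2 => w 0) hy'
    have b1 : q 1 - y 1 = ‖q - y‖ * u 1 := by simpa using congrArg (fun w : E2 => w 1) hy'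
    calc crossD q y x = (q 0 - y 0) * (q 1 - x 1) - (q 1 - y 1) * (q 0 - x 0) := by
          simp only [crossD]; ring
      _ = _ := by
          rw [a0, a1, b0, b1]
          simp only [PiLp.sub_apply]
          ring
  have h5 := abs_cross_le u (v - u)
  rw [hun, one_mul] at h5
  rw [e, abs_mul, abs_of_nonneg (by positivity), dist_eq_norm]
  have h6 : ‖q - y‖ * ‖q - x‖ ≤ 2 * 2 := mul_le_mul h4 h3 h1.le (by norm_num)
  calc ‖q - y‖ * ‖q - x‖ * |u 0 * (v - u) 1 - u 1 * (v - u) 0| ≤ 2 * 2 * ‖v - u‖ :=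
        mul_le_mul h6 h5 (abs_nonneg _) (by norm_num)
    _ = _ := by ring

/-- If no point of `E` lies in a heavy strip through `q`, the radial projection of `E` from `q`
has large content: arcs of diameter `d` pull back to strips of width comparable to `d`. -/
lemma content_lower {σ M : ℝ} {ν : Measure E2} [IsProbabilityMeasure ν] {q : E2} {E : Set E2}
    (hσ : 0 < σ) (hσ1 : σ ≤ 1) (hM : 1 ≤ M) (hq : ‖q‖ ≤ 1) (hE : ∀ y ∈ E, ‖y‖ ≤ 1 ∧ q ≠ y)
    (hbad : ∀ y ∈ E, (q, y) ∉ badSet σ M ν) :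
    ν E / ENNReal.ofReal (8 * M) ≤ hContentInf σ (radProj q '' E) := by
  have hM0 : 0 < M := by linarith
  refine le_iInf₂ fun c hc => ENNReal.div_le_of_le_mul' ?_
  have hsub : E ⊆ ⋃ n, (E ∩ radProj q ⁻¹' c n) := by
    intro y hy
    obtain ⟨n, hn⟩ := Set.mem_iUnion.1 (hc ⟨y, hy, rfl⟩)
    exact Set.mem_iUnion.2 ⟨n, hy, hn⟩
  rw [← ENNReal.tsum_mul_left]
  refine (measure_mono hsub).trans ((measure_iUnion_le _).trans (ENNReal.tsum_le_tsum fun n => ?_))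
  rcases (E ∩ radProj q ⁻¹' c n).eq_empty_or_nonempty with h0 | ⟨y, hy, hyc⟩
  · rw [h0]; simp
  by_cases htop : EMetric.diam (c n) = ⊤
  · rw [htop, ENNReal.top_rpow_of_pos hσ, ENNReal.mul_top]
    · exact le_top
    · simpa using hM0
  set d := (EMetric.diam (c n)).toReal with hd
  have hd0 : 0 ≤ d := ENNReal.toReal_nonneg
  have hstrip : ∀ r, 4 * d < r →
      ν (E ∩ radProj q ⁻¹' c n) ≤ ENNReal.ofReal (M * (2 * r) ^ σ) := by
    intro r hr
    refine (measure_mono ?_).trans (strip_le_of_not_bad (hbad y hy) hσ.le hM (by linarith))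
    rintro x ⟨hx, hxc⟩
    refine (abs_crossD_le_radProj (hE x hx).2 (hE y hy).2 hq (hE x hx).1 (hE y hy).1).trans ?_
    have : dist (radProj q x) (radProj q y) ≤ d := by
      rw [dist_edist, hd]
      exact ENNReal.toReal_mono htop (Metric.edist_le_ediam_of_mem hxc hyc)
    linarith
  -- letting the width decrease to `4 d` also covers the case `d = 0`
  have hlim : Filter.Tendsto (fun r : ℝ => ENNReal.ofReal (M * (2 * r) ^ σ))
      (nhdsWithin (4 * d) (Set.Ioi (4 * d))) (nhds (ENNReal.ofReal (M * (2 * (4 * d)) ^ σ))) := by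
    refine Filter.Tendsto.mono_left ?_ nhdsWithin_le_nhds
    refine (ENNReal.continuous_ofReal.tendsto _).comp ?_
    have hc : Continuous fun r : ℝ => M * (2 * r) ^ σ :=
      continuous_const.mul ((continuous_const.mul continuous_id).rpow_const fun _ => Or.inr hσ.le)
    exact hc.tendsto _
  have h1 := ge_of_tendsto hlim (Filter.eventually_of_mem self_mem_nhdsWithin hstrip)
  refine h1.trans ?_
  have e1 : EMetric.diam (c n) ^ σ = ENNReal.ofReal (d ^ σ) := by
    rw [← ENNReal.ofReal_rpow_of_nonneg hd0 hσ.le, hd, ENNReal.ofReal_toReal htop]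
  rw [e1, ← ENNReal.ofReal_mul (by positivity)]
  apply ENNReal.ofReal_le_ofReal
  have e2 : (8:ℝ) ^ σ ≤ 8 := by
    calc (8:ℝ) ^ σ ≤ 8 ^ (1:ℝ) := Real.rpow_le_rpow_of_exponent_le (by norm_num) hσ1
      _ = 8 := by norm_num
  calc M * (2 * (4 * d)) ^ σ = M * (8 ^ σ * d ^ σ) := by
        rw [← Real.mul_rpow (by norm_num) hd0]; ring_nf
    _ ≤ M * (8 * d ^ σ) := by gcongr
    _ = _ := by ring

/-- Some point of `spt μ` sees few heavy strips at every level `2 ^ k`: the sum over `k` of the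
weighted bad masses has bounded mean, so it is at most its mean at some point. -/
lemma exists_good_point {K η σ : ℝ} {μ ν : Measure E2} [IsProbabilityMeasure μ]
    [IsProbabilityMeasure ν] (hK : 0 ≤ K) (hη : 0 < η) (hT : Tail K η σ μ ν ν) :
    ∃ q ∈ spt μ, ∀ k : ℕ, ν {y | (q, y) ∈ badSet σ (2 ^ k) ν} ≤
      ENNReal.ofReal (K / (1 - (1 / 2) ^ (η / 2)) * ((1 / 2) ^ (η / 2)) ^ k) := by
  set θ : ℝ := (1 / 2) ^ (η / 2) with hθ
  have hθ0 : 0 < θ := by positivity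
  have hθ1 : θ < 1 := Real.rpow_lt_one (by norm_num) (by norm_num) (by linarith)
  set f : E2 → ℝ≥0∞ := fun q =>
    ∑' k : ℕ, ENNReal.ofReal ((θ ^ k)⁻¹) * ν {y | (q, y) ∈ badSet σ (2 ^ k) ν} with hf
  have hm : ∀ k : ℕ, Measurable fun q => ν {y | (q, y) ∈ badSet σ (2 ^ k) ν} := fun k =>
    measurable_measure_prodMk_left (measurableSet_badSet σ (2 ^ k) ν)
  have hint : ∫⁻ q, f q ∂μ ≤ ENNReal.ofReal (K / (1 - θ)) := by
    rw [hf, lintegral_tsum fun k => ((hm k).const_mul _).aemeasurable]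
    calc _ ≤ ∑' k : ℕ, ENNReal.ofReal (K * θ ^ k) := by
          refine ENNReal.tsum_le_tsum fun k => ?_
          rw [lintegral_const_mul _ (hm k)]
          have e1 : ∫⁻ q, ν {y | (q, y) ∈ badSet σ (2 ^ k) ν} ∂μ =
              (μ.prod ν) (badSet σ (2 ^ k) ν) :=
            (Measure.prod_apply (measurableSet_badSet σ (2 ^ k) ν)).symm
          have e2 : ((2:ℝ) ^ k) ^ (-η) = θ ^ k * θ ^ k := by
            rw [hθ, ← mul_pow, ← Real.rpow_add (by norm_num), ← Real.rpow_natCast,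
              ← Real.rpow_natCast, ← Real.rpow_mul (by norm_num), ← Real.rpow_mul (by norm_num),
              one_div, Real.inv_rpow (by norm_num), ← Real.rpow_neg (by norm_num)]
            congr 1; ring
          have h1 := hT (2 ^ k) (one_le_pow₀ (by norm_num))
          rw [e2] at h1
          rw [e1]
          calc _ ≤ ENNReal.ofReal ((θ ^ k)⁻¹) * ENNReal.ofReal (K * (θ ^ k * θ ^ k)) := by
                gcongr
            _ = _ := by
                rw [← ENNReal.ofReal_mul (by positivity)]
                congr 1
                field_simp
      _ = _ := by
          rw [← ENNReal.ofReal_tsum_of_nonneg (fun k => by positivity)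
            ((summable_geometric_of_lt_one hθ0.le hθ1).mul_left _), tsum_mul_left,
            tsum_geometric_of_lt_one hθ0.le hθ1, div_eq_mul_inv]
  obtain ⟨q, hq, hle⟩ := exists_notMem_null_le_lintegral (μ := μ) (f := f)
    (Measurable.tsum fun k => (hm k).const_mul _).aemeasurable (measure_compl_spt μ)
  refine ⟨q, not_not.1 hq, fun k => ?_⟩
  have h1 : ENNReal.ofReal ((θ ^ k)⁻¹) * ν {y | (q, y) ∈ badSet σ (2 ^ k) ν} ≤
      ENNReal.ofReal (K / (1 - θ)) := (ENNReal.le_tsum k).trans (hle.trans hint)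
  calc ν {y | (q, y) ∈ badSet σ (2 ^ k) ν}
      = ENNReal.ofReal (θ ^ k) * (ENNReal.ofReal ((θ ^ k)⁻¹) *
          ν {y | (q, y) ∈ badSet σ (2 ^ k) ν}) := by
        rw [← mul_assoc, ← ENNReal.ofReal_mul (by positivity), mul_inv_cancel₀ (by positivity),
          ENNReal.ofReal_one, one_mul]
    _ ≤ ENNReal.ofReal (θ ^ k) * ENNReal.ofReal (K / (1 - θ)) := by gcongr
    _ = _ := by rw [← ENNReal.ofReal_mul (by positivity), mul_comm]

/-- A dyadic level at which a tail of exponent `η / 2` is at most half of `m`. -/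
lemma exists_level {A B η m : ℝ} (hA : 1 ≤ A) (hBA : 2 * B ≤ A) (hη : 0 < η)
    (hm : 0 < m) (hm1 : m ≤ 1) :
    ∃ k : ℕ, B * ((1 / 2) ^ (η / 2)) ^ k ≤ m / 2 ∧ (2:ℝ) ^ k ≤ 2 * (A / m) ^ (2 / η) := by
  have hAm : 1 ≤ A / m := by rw [le_div_iff₀ hm]; linarith
  set x := (A / m) ^ (2 / η) with hx
  have hx1 : 1 ≤ x := Real.one_le_rpow hAm (by positivity)
  obtain ⟨k, hk1, hk2⟩ := exists_dyadic (r := 1 / (2 * x)) (by positivity)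
    (by rw [div_le_iff₀ (by positivity)]; linarith)
  have hpow : (1 / 2 : ℝ) ^ k = 1 / 2 ^ k := by rw [div_pow, one_pow]
  have hk2' : (1 / 2 : ℝ) ^ k ≤ 1 / x := hk2.trans (le_of_eq (by field_simp))
  refine ⟨k, ?_, ?_⟩
  · have e1 : ((1 / 2 : ℝ) ^ (η / 2)) ^ k = ((1 / 2 : ℝ) ^ k) ^ (η / 2) := by
      rw [← Real.rpow_natCast, ← Real.rpow_natCast, ← Real.rpow_mul (by norm_num),
        ← Real.rpow_mul (by norm_num), mul_comm]
    have e2 : (1 / x) ^ (η / 2) = m / A := by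
      rw [one_div, Real.inv_rpow (by positivity), hx, ← Real.rpow_mul (by positivity)]
      have : 2 / η * (η / 2) = 1 := by field_simp
      rw [this, Real.rpow_one, inv_div]
    have e3 : ((1 / 2 : ℝ) ^ k) ^ (η / 2) ≤ m / A := by
      rw [← e2]; exact Real.rpow_le_rpow (by positivity) hk2' (by positivity)
    rw [e1]
    calc B * ((1 / 2 : ℝ) ^ k) ^ (η / 2) ≤ A / 2 * ((1 / 2 : ℝ) ^ k) ^ (η / 2) := by
          gcongr; linarith
      _ ≤ A / 2 * (m / A) := by gcongr
      _ = m / 2 := by field_simp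
  · rw [hpow, div_le_div_iff_of_pos_left (by norm_num) (by positivity) (by positivity)] at hk1
    exact hk1

lemma adm_of_hyp {C s t : ℝ} {μ ν : Measure E2} [IsProbabilityMeasure μ] [IsProbabilityMeasure ν]
    (hC : 1 ≤ C) (hs : 0 < s) (hst : s ≤ t)
    (hμ1 : μ (closedBall 0 1)ᶜ = 0) (hν1 : ν (closedBall 0 1)ᶜ = 0)
    (hsep : ∀ x ∈ spt μ, ∀ y ∈ spt ν, (1/2 : ℝ) ≤ dist x y)
    (hμ : Frost C t μ) (hν : Frost C s ν) : Adm C s t μ ν := by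
  refine ⟨inferInstance, inferInstance, hμ, ?_, hν, hμ1, hν1, ?_⟩
  · intro x r hr
    rcases le_or_gt r 1 with h1 | h1
    · refine (hμ x r hr).trans (ENNReal.ofReal_le_ofReal ?_)
      exact mul_le_mul_of_nonneg_left (Real.rpow_le_rpow_of_exponent_ge hr h1 hst) (by linarith)
    · refine prob_le_one.trans ?_
      rw [← ENNReal.ofReal_one]
      refine ENNReal.ofReal_le_ofReal ?_
      have := Real.one_le_rpow h1.le hs.le
      nlinarith
  · have h1 : ∀ᵐ x ∂μ, x ∈ spt μ := measure_compl_spt μ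
    have h2 : ∀ᵐ x ∂ν, x ∈ spt ν := measure_compl_spt ν
    filter_upwards [Measure.quasiMeasurePreserving_fst.ae h1,
      Measure.quasiMeasurePreserving_snd.ae h2] with p hp1 hp2
    exact hsep _ hp1 _ hp2

lemma Frost.mono {C C' s : ℝ} {ω : Measure E2} (h : Frost C s ω) (hC : C ≤ C') : Frost C' s ω :=
  fun x r hr => (h x r hr).trans (ENNReal.ofReal_le_ofReal
    (mul_le_mul_of_nonneg_right hC (by positivity)))

lemma hContentInf_mono {σ : ℝ} {A B : Set E2} (h : A ⊆ B) : hContentInf σ A ≤ hContentInf σ B :=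
  le_iInf₂ fun c hc => iInf₂_le c (h.trans hc)

/-- Quantitative radial projection estimate: there is `K = K(C,s,σ,t)` such that for
Frostman probability measures `μ` (exponent `t`) and `ν` (exponent `s`) on `B(0,1)`
with separated supports, some `q ∈ spt μ` satisfies
`𝓗^σ_∞(π_q(E')) ≥ (ν E')^K / K` for all Borel `E' ⊆ spt ν`. -/
theorem stmt19 (s σ t C : ℝ) (hs : s ∈ Set.Ioc (0:ℝ) 1) (hσ : σ ∈ Set.Ioo 0 s)
    (ht : t ∈ Set.Ioc (1:ℝ) 2) (hC : 0 < C) :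
    ∃ K : ℝ, 1 ≤ K ∧ ∀ μ ν : Measure E2,
      IsProbabilityMeasure μ → IsProbabilityMeasure ν →
      μ (closedBall (0:E2) 1)ᶜ = 0 → ν (closedBall (0:E2) 1)ᶜ = 0 →
      (∀ x ∈ spt μ, ∀ y ∈ spt ν, (1/2 : ℝ) ≤ dist x y) →
      (∀ (x : E2) (r : ℝ), 0 < r → μ (closedBall x r) ≤ ENNReal.ofReal (C * r ^ t)) →
      (∀ (x : E2) (r : ℝ), 0 < r → ν (closedBall x r) ≤ ENNReal.ofReal (C * r ^ s)) →
      ∃ q ∈ spt μ, ∀ E' : Set E2, MeasurableSet E' → E' ⊆ spt ν →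
        ENNReal.ofReal ((ν E').toReal ^ K / K) ≤ hContentInf σ (radProj q '' E') := by
  have hσ0 := hσ.1
  have hC1 : 1 ≤ max C 1 := le_max_right _ _
  obtain ⟨K, η, hK, hη0, hη1, hT⟩ := exists_tail (C := max C 1) (by linarith) hσ.1 hσ.2 hs.2 ht.1
    ht.2
  set B : ℝ := K / (1 - (1 / 2) ^ (η / 2)) with hB
  set A : ℝ := max (2 * B) 1 with hA
  have hA1 : 1 ≤ A := le_max_right _ _
  have hA0 : 0 < A ^ (2 / η) := by positivity
  have hη2 : 0 < 2 / η := by positivity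
  have hA2 : 1 ≤ A ^ (2 / η) := Real.one_le_rpow hA1 hη2.le
  refine ⟨32 * A ^ (2 / η) + (1 + 2 / η), by linarith, ?_⟩
  intro μ ν hμp hνp hμ1 hν1 hsep hμ hν
  have hadm : Adm (max C 1) s t μ ν := adm_of_hyp hC1 hs.1 (by linarith [hs.2, ht.1]) hμ1 hν1 hsep
    (Frost.mono hμ (le_max_left _ _)) (Frost.mono hν (le_max_left _ _))
  obtain ⟨q, hq, hbad⟩ := exists_good_point hK hη0 (hT μ ν hadm)
  refine ⟨q, hq, fun E' _ hE' => ?_⟩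
  set m := (ν E').toReal with hmdef
  have hm : ν E' = ENNReal.ofReal m := (ENNReal.ofReal_toReal (measure_ne_top ν E')).symm
  have hm0 : 0 ≤ m := ENNReal.toReal_nonneg
  rcases hm0.eq_or_lt with h0 | h0
  · have : m = 0 := h0.symm
    rw [this, Real.zero_rpow (by positivity), zero_div, ENNReal.ofReal_zero]
    exact zero_le
  have hm1 : m ≤ 1 := ENNReal.toReal_le_of_le_ofReal (by norm_num) (by simpa using prob_le_one)
  -- `2 ^ k` is about `m ^ (-2 / η)`, which is where the power of `ν E'` comes from
  obtain ⟨k, hk1, hk2⟩ := exists_level hA1 (le_max_left _ _ : 2 * B ≤ A) hη0 h0 hm1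
  set bad := {y | (q, y) ∈ badSet σ (2 ^ k) ν} with hbaddef
  have hbadm : ν bad ≤ ENNReal.ofReal (m / 2) :=
    (hbad k).trans (ENNReal.ofReal_le_ofReal hk1)
  have hgood : ENNReal.ofReal (m / 2) ≤ ν (E' \ bad) := by
    have h1 : ν E' ≤ ν (E' \ bad) + ν bad :=
      (measure_mono (fun x hx => by
        by_cases hb : x ∈ bad
        · exact Or.inr hb
        · exact Or.inl ⟨hx, hb⟩)).trans (measure_union_le _ _)
    have h2 : ENNReal.ofReal (m / 2) + ENNReal.ofReal (m / 2) ≤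
        ν (E' \ bad) + ENNReal.ofReal (m / 2) := by
      rw [← ENNReal.ofReal_add (by linarith) (by linarith), add_halves, ← hm]
      exact h1.trans (add_le_add le_rfl hbadm)
    exact (ENNReal.add_le_add_iff_right ENNReal.ofReal_ne_top).1 h2
  have hcont := content_lower (E := E' \ bad) hσ.1 (by linarith [hσ.2, hs.2])
    (one_le_pow₀ (by norm_num) : (1:ℝ) ≤ 2 ^ k) (norm_le_of_mem_spt hμ1 hq)
    (fun y hy => ⟨norm_le_of_mem_spt hν1 (hE' hy.1), dist_pos.1
      (lt_of_lt_of_le (by norm_num) (hsep q hq y (hE' hy.1)))⟩) (fun y hy => hy.2)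
  refine le_trans ?_ (hcont.trans (hContentInf_mono (Set.image_mono Set.sdiff_subset)))
  refine le_trans ?_ (ENNReal.div_le_div_right hgood _)
  rw [← ENNReal.ofReal_div_of_pos (by positivity)]
  apply ENNReal.ofReal_le_ofReal
  calc m ^ (32 * A ^ (2 / η) + (1 + 2 / η)) / (32 * A ^ (2 / η) + (1 + 2 / η))
      ≤ m ^ (1 + 2 / η) / (32 * A ^ (2 / η)) := by
        apply div_le_div₀ (by positivity) _ (by positivity) (by linarith)
        exact Real.rpow_le_rpow_of_exponent_ge h0 hm1 (by linarith)
    _ = m / 2 / (8 * (2 * (A / m) ^ (2 / η))) := by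
        rw [Real.rpow_add h0, Real.rpow_one, Real.div_rpow (by linarith) h0.le]
        have : 0 < m ^ (2 / η) := by positivity
        field_simp
        ring
    _ ≤ m / 2 / (8 * 2 ^ k) := by
        gcongr
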